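/- Let (s,u) be a solution of problem (P) on (0,T) with initial data (s₀,φ) ∈ W, where T ∈ (0,∞]. Then for every t ∈ (0,T): (d/dt) E(s(t),u(t)) = −∫₀^{s(t)} |∂_t u(t,x)|² dx − (1/2) s'(t)³, and ‖u(t)‖_{L¹} − ‖φ‖_{L¹} = s₀ − s(t) + ∫₀^t u(τ,0)^p dτ. In particular, for all t₁, t₂ ∈ (0,T) with t₁ ≤ t₂, ∫_{t₁}^{t₂} ∫₀^{s(t)} |∂_t u|² dx dt + (1/2) ∫_{t₁}^{t₂} s'(t)³ dt = E(s(t₁),u(t₁)) − E(s(t₂),u(t₂)). -/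

import Mathlib

open Set MeasureTheory Filter Topology Real
open scoped ENNReal

noncomputable section

/-- `(s₀, φ)` belongs to the class `W`: `s₀ ∈ (0,∞)`, `φ` is Lipschitz on `[0,s₀]`,
not identically zero, nonnegative there, and vanishes at `s₀`. -/
def memW (s₀ : ℝ) (φ : ℝ → ℝ) : Prop :=
  0 < s₀ ∧ (∃ K : NNReal, LipschitzOnWith K φ (Icc 0 s₀)) ∧
    (∃ x ∈ Icc 0 s₀, φ x ≠ 0) ∧ (∀ x ∈ Icc 0 s₀, 0 ≤ φ x) ∧ φ s₀ = 0

/-- `(s,u)` is a solution of the one-phase Stefan problem (P) on `(0,T]` (finite `T`)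
with exponent `p` and initial data `(s₀,φ)`. -/
structure IsSolOn (p s₀ : ℝ) (φ : ℝ → ℝ) (T : ℝ) (s : ℝ → ℝ) (u : ℝ → ℝ → ℝ) : Prop where
  T_pos : 0 < T
  s_cont : ContinuousOn s (Icc 0 T)
  s_diff : ∀ t ∈ Ioc 0 T, DifferentiableAt ℝ s t
  s_deriv_cont : ContinuousOn (deriv s) (Ioc 0 T)
  s_pos : ∀ t ∈ Icc 0 T, 0 < s t
  ut_diff : ∀ t ∈ Ioc 0 T, ∀ x ∈ Ioo 0 (s t), DifferentiableAt ℝ (fun τ => u τ x) t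
  ux_diff : ∀ t ∈ Ioc 0 T, ∀ x ∈ Ioo 0 (s t), DifferentiableAt ℝ (u t) x
  uxx_diff : ∀ t ∈ Ioc 0 T, ∀ x ∈ Ioo 0 (s t), DifferentiableAt ℝ (deriv (u t)) x
  ut_cont : ContinuousOn (fun q : ℝ × ℝ => deriv (fun τ => u τ q.2) q.1)
      {q : ℝ × ℝ | q.1 ∈ Ioc 0 T ∧ q.2 ∈ Ioo 0 (s q.1)}
  uxx_cont : ContinuousOn (fun q : ℝ × ℝ => deriv (deriv (u q.1)) q.2)
      {q : ℝ × ℝ | q.1 ∈ Ioc 0 T ∧ q.2 ∈ Ioo 0 (s q.1)}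
  ux_cont : ContinuousOn (fun q : ℝ × ℝ => deriv (u q.1) q.2)
      {q : ℝ × ℝ | q.1 ∈ Ioc 0 T ∧ q.2 ∈ Icc 0 (s q.1)}
  u_cont : ContinuousOn (fun q : ℝ × ℝ => u q.1 q.2)
      {q : ℝ × ℝ | q.1 ∈ Icc 0 T ∧ q.2 ∈ Icc 0 (s q.1)}
  u_nonneg : ∀ t ∈ Icc 0 T, ∀ x ∈ Icc 0 (s t), 0 ≤ u t x
  heat : ∀ t ∈ Ioc 0 T, ∀ x ∈ Ioo 0 (s t),
      deriv (fun τ => u τ x) t = deriv (deriv (u t)) x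
  bc_zero : ∀ t ∈ Ioc 0 T, -deriv (u t) 0 = u t 0 ^ p
  bc_free : ∀ t ∈ Ioc 0 T, u t (s t) = 0
  stefan : ∀ t ∈ Ioc 0 T, deriv s t = -deriv (u t) (s t)
  init : ∀ x ∈ Icc 0 s₀, u 0 x = φ x
  init_s : s 0 = s₀

/-- `(s,u)` is a global-in-time solution of problem (P). -/
def IsGlobalSol (p s₀ : ℝ) (φ : ℝ → ℝ) (s : ℝ → ℝ) (u : ℝ → ℝ → ℝ) : Prop :=
  ∀ T : ℝ, 0 < T → IsSolOn p s₀ φ T s u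

/-- `Tm ∈ (0,∞]` is the maximal existence time of the solution `(s,u)` of (P) with
initial data `(s₀,φ)`: the solution exists on `(0,T]` for every `T < Tm`, and for
`T > Tm` problem (P) admits no solution on `(0,T]`. -/
def IsMaxSol (p s₀ : ℝ) (φ : ℝ → ℝ) (Tm : ℝ≥0∞) (s : ℝ → ℝ) (u : ℝ → ℝ → ℝ) : Prop :=
  0 < Tm ∧
    (∀ T : ℝ, 0 < T → ENNReal.ofReal T < Tm → IsSolOn p s₀ φ T s u) ∧
    (∀ T : ℝ, Tm < ENNReal.ofReal T → ¬∃ σ v, IsSolOn p s₀ φ T σ v)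

/-- The sup norm `‖u(t)‖_{L^∞(0,s(t))}`. -/
def supNorm (s : ℝ → ℝ) (u : ℝ → ℝ → ℝ) (t : ℝ) : ℝ :=
  sSup (u t '' Ioo 0 (s t))

/-- The `L¹` norm `‖u(t)‖_{L¹(0,s(t))}` of the nonnegative function `u(t,·)`. -/
def L1Norm (s : ℝ → ℝ) (u : ℝ → ℝ → ℝ) (t : ℝ) : ℝ :=
  ∫ x in (0:ℝ)..(s t), u t x

/-- The energy `E(s(t),u(t))`. -/
def energy (p : ℝ) (s : ℝ → ℝ) (u : ℝ → ℝ → ℝ) (t : ℝ) : ℝ :=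
  1 / 2 * (∫ x in (0:ℝ)..(s t), (deriv (u t) x) ^ 2) - u t 0 ^ (p + 1) / (p + 1)

/-!
Neither `u_t` nor `u_xx` is known to extend continuously to the boundary, so the identities cannot
be obtained by differentiating under the integral sign. Maximum principle barriers for `u` and its
time differences provide what is needed: comparing the solution with its even reflection at `x = 0`
bounds the gradient of a time difference by its Neumann data, and comparing increments over times
`h` and `2h` upgrades the resulting estimate to `α`-Hölder continuity of `u` in time near `x = 0`,
for every `α < 1`. With interior estimates and a barrier at the free boundary this gives
`|u_xx| ≤ C (1 + x ^ (-1/4))`, which is square integrable.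

The increments of energy and mass between two times are integrated by parts on the smaller of the
two domains. After division by the time increment, the bulk terms converge by dominated convergence
and the free boundary terms by the Stefan condition. At `x = 0` the energy leaves the error of the
trapezoid rule for `∫ v ^ p dv`, which is quadratic in the increment of `u(·, 0)`; it vanishes in
the limit because `u(·, 0)` is Hölder continuous with an exponent above `1/2`.
-/

/-! ### Maximum principle for the heat equation -/

lemma nonpos_of_isLocalMaxOn_Ici {g : ℝ → ℝ} {x c : ℝ} (hmax : IsLocalMaxOn g (Ici x) x)
    (hg : HasDerivWithinAt g c (Ici x) x) : c ≤ 0 := by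
  have hcone : (1 : ℝ) ∈ posTangentConeAt (Ici x) x :=
    mem_posTangentConeAt_of_segment_subset <| by
      rw [segment_eq_Icc (by linarith)]; exact Icc_subset_Ici_self
  simpa using hmax.hasFDerivWithinAt_nonpos hg.hasFDerivWithinAt hcone

lemma nonneg_of_isLocalMaxOn_Iic {g : ℝ → ℝ} {x c : ℝ} (hmax : IsLocalMaxOn g (Iic x) x)
    (hg : HasDerivWithinAt g c (Iic x) x) : 0 ≤ c := by
  have hcone : (-1 : ℝ) ∈ posTangentConeAt (Iic x) x :=
    mem_posTangentConeAt_of_segment_subset <| by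
      rw [segment_symm, segment_eq_Icc (by linarith)]; exact Icc_subset_Iic_self
  simpa using hmax.hasFDerivWithinAt_nonpos hg.hasFDerivWithinAt hcone

lemma second_deriv_nonpos_of_isLocalMax {g g' : ℝ → ℝ} {x c : ℝ} (hmax : IsLocalMax g x)
    (hg : ∀ᶠ y in 𝓝 x, HasDerivAt g (g' y) y) (hg' : HasDerivAt g' c x) : c ≤ 0 := by
  by_contra! hc
  have hderiv : deriv g =ᶠ[𝓝 x] g' := hg.mono fun y hy => hy.deriv
  have hmin : IsLocalMin g x := isLocalMin_of_deriv_deriv_pos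
    (by rwa [hderiv.deriv_eq, hg'.deriv]) hmax.deriv_eq_zero hg.self_of_nhds.continuousAt
  have hconst : g =ᶠ[𝓝 x] fun _ => g x := by
    filter_upwards [hmax, hmin] with y h₁ h₂ using le_antisymm h₁ h₂
  have hzero : deriv (deriv g) x = 0 := by simpa using hconst.deriv.deriv_eq
  rw [hderiv.deriv_eq, hg'.deriv] at hzero
  exact hc.ne' hzero

lemma hasDerivAt_quadratic {a b c d x : ℝ} :
    HasDerivAt (fun y => a + b * y + c * y ^ 2 + d) (b + 2 * c * x) x := by
  refine ((((hasDerivAt_const_mul b).const_add a).fun_add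
    ((hasDerivAt_pow 2 x).const_mul c)).add_const d).congr_deriv ?_
  norm_num; ring

lemma le_of_eventually_symm_sub_le {g : ℝ → ℝ} {x d K : ℝ} (hg : HasDerivAt g d x)
    (hle : ∀ᶠ y in 𝓝[>] 0, g (y + x) - g (x - y) ≤ 2 * K * y) : d ≤ K := by
  have hadd : HasDerivAt (fun y => g (y + x)) d 0 := HasDerivAt.comp_add_const 0 x (by simpa)
  have hsub : HasDerivAt (fun y => g (x - y)) (-d) 0 := HasDerivAt.comp_const_sub x 0 (by simpa)
  have hmax : IsLocalMaxOn (fun y => g (y + x) - g (x - y) - 2 * K * y) (Ici 0) 0 := by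
    rw [IsLocalMaxOn, ← Ioi_insert, IsMaxFilter, nhdsWithin_insert, eventually_sup]
    exact ⟨by simp, hle.mono fun y hy => by simpa using hy⟩
  have hnonpos := nonpos_of_isLocalMaxOn_Ici hmax
    ((hadd.fun_sub hsub).fun_sub (hasDerivAt_const_mul (2 * K))).hasDerivWithinAt
  linarith

/-- The heat equation at the point `(t, x)` in the classical sense, with the derivatives as data:
`fx` is the spatial derivative of `f` near `x`, and `fxx` is both the spatial derivative of `fx`
and the time derivative of `f`. -/
structure HeatAt (f fx fxx : ℝ → ℝ → ℝ) (t x : ℝ) : Prop where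
  eventually_hasDerivAt : ∀ᶠ y in 𝓝 x, HasDerivAt (f t) (fx t y) y
  hasDerivAt_fx : HasDerivAt (fx t) (fxx t x) x
  hasDerivAt_time : HasDerivAt (fun τ => f τ x) (fxx t x) t

namespace HeatAt

variable {f fx fxx g gx gxx : ℝ → ℝ → ℝ} {t x k : ℝ}

lemma hasDerivAt (h : HeatAt f fx fxx t x) : HasDerivAt (f t) (fx t x) x :=
  h.eventually_hasDerivAt.self_of_nhds

lemma neg (h : HeatAt f fx fxx t x) :
    HeatAt (fun t x => -f t x) (fun t x => -fx t x) (fun t x => -fxx t x) t x where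
  eventually_hasDerivAt := h.eventually_hasDerivAt.mono fun _ hy => hy.neg
  hasDerivAt_fx := h.hasDerivAt_fx.neg
  hasDerivAt_time := h.hasDerivAt_time.neg

lemma sub (hf : HeatAt f fx fxx t x) (hg : HeatAt g gx gxx t x) :
    HeatAt (fun t x => f t x - g t x) (fun t x => fx t x - gx t x)
      (fun t x => fxx t x - gxx t x) t x where
  eventually_hasDerivAt := by
    filter_upwards [hf.eventually_hasDerivAt, hg.eventually_hasDerivAt] with y hy hy'
      using hy.sub hy'
  hasDerivAt_fx := hf.hasDerivAt_fx.sub hg.hasDerivAt_fx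
  hasDerivAt_time := hf.hasDerivAt_time.sub hg.hasDerivAt_time

lemma div_const (h : HeatAt f fx fxx t x) (k : ℝ) :
    HeatAt (fun t x => f t x / k) (fun t x => fx t x / k) (fun t x => fxx t x / k) t x where
  eventually_hasDerivAt := h.eventually_hasDerivAt.mono fun _ hy => hy.div_const k
  hasDerivAt_fx := h.hasDerivAt_fx.div_const k
  hasDerivAt_time := h.hasDerivAt_time.div_const k

lemma comp_time_add (h : HeatAt f fx fxx (t + k) x) :
    HeatAt (fun t x => f (t + k) x) (fun t x => fx (t + k) x) (fun t x => fxx (t + k) x) t x where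
  eventually_hasDerivAt := h.eventually_hasDerivAt
  hasDerivAt_fx := h.hasDerivAt_fx
  hasDerivAt_time := HasDerivAt.comp_add_const t k h.hasDerivAt_time

lemma comp_add_const (h : HeatAt f fx fxx t (x + k)) :
    HeatAt (fun t x => f t (x + k)) (fun t x => fx t (x + k)) (fun t x => fxx t (x + k)) t x where
  eventually_hasDerivAt :=
    ((continuous_add_const k).tendsto x).eventually h.eventually_hasDerivAt |>.mono
      fun y hy => HasDerivAt.comp_add_const y k hy
  hasDerivAt_fx := HasDerivAt.comp_add_const x k h.hasDerivAt_fx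
  hasDerivAt_time := h.hasDerivAt_time

lemma comp_const_sub (h : HeatAt f fx fxx t (k - x)) :
    HeatAt (fun t x => f t (k - x)) (fun t x => -fx t (k - x)) (fun t x => fxx t (k - x)) t x where
  eventually_hasDerivAt :=
    ((continuous_sub_left k).tendsto x).eventually h.eventually_hasDerivAt |>.mono
      fun y hy => HasDerivAt.comp_const_sub k y hy
  hasDerivAt_fx := by simpa using (HasDerivAt.comp_const_sub k x h.hasDerivAt_fx).fun_neg
  hasDerivAt_time := h.hasDerivAt_time

lemma time_diff (h : HeatAt f fx fxx t x) (h' : HeatAt f fx fxx (t + k) x) :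
    HeatAt (fun t x => f (t + k) x - f t x) (fun t x => fx (t + k) x - fx t x)
      (fun t x => fxx (t + k) x - fxx t x) t x :=
  h'.comp_time_add.sub h

lemma space_diff_quotient (h : HeatAt f fx fxx t x) (h' : HeatAt f fx fxx t (x + k)) :
    HeatAt (fun t x => (f t (x + k) - f t x) / k) (fun t x => (fx t (x + k) - fx t x) / k)
      (fun t x => (fxx t (x + k) - fxx t x) / k) t x :=
  (h'.comp_add_const.sub h).div_const k

lemma not_isMaxOn_sub_quadratic {a b c d : ℝ} {S : Set (ℝ × ℝ)} (h : HeatAt f fx fxx t x)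
    (hcd : 2 * c < d) (hspace : ∀ᶠ y in 𝓝 x, (t, y) ∈ S) (htime : ∀ᶠ τ in 𝓝[<] t, (τ, x) ∈ S) :
    ¬IsMaxOn (fun q : ℝ × ℝ => f q.1 q.2 - (a + b * q.2 + c * q.2 ^ 2 + d * q.1)) S (t, x) := by
  intro hmax
  have hspace_max : IsLocalMax (fun y => f t y - (a + b * y + c * y ^ 2 + d * t)) x :=
    hspace.mono fun y hy => hmax hy
  have htime_max : IsLocalMaxOn (fun τ => f τ x - (a + b * x + c * x ^ 2 + d * τ)) (Iic t) t := by
    rw [IsLocalMaxOn, ← Iio_insert, IsMaxFilter, nhdsWithin_insert, eventually_sup]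
    exact ⟨by simp, htime.mono fun τ hτ => hmax hτ⟩
  have hxx : fxx t x - 2 * c ≤ 0 := by
    refine second_deriv_nonpos_of_isLocalMax (g' := fun y => fx t y - (b + 2 * c * y)) hspace_max
      (h.eventually_hasDerivAt.mono fun y hy => hy.fun_sub ?_) (h.hasDerivAt_fx.fun_sub ?_)
    · exact hasDerivAt_quadratic
    · exact (hasDerivAt_const_mul (2 * c)).const_add b
  have ht : 0 ≤ fxx t x - d := nonneg_of_isLocalMaxOn_Iic htime_max
    (h.hasDerivAt_time.fun_sub ((hasDerivAt_const_mul d).const_add _)).hasDerivWithinAt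
  linarith

end HeatAt

lemma forall_nonpos_of_not_isMaxOn {X : Type*} [TopologicalSpace X] {S : Set X} {w : X → ℝ}
    (hS : IsCompact S) (hw : ContinuousOn w S) (h : ∀ q ∈ S, 0 < w q → ¬IsMaxOn w S q) :
    ∀ q ∈ S, w q ≤ 0 := by
  intro q hq
  obtain ⟨m, hm, hmax⟩ := hS.exists_isMaxOn ⟨q, hq⟩ hw
  exact (hmax hq).trans (not_lt.1 fun hpos => h m hm hpos hmax)

/-- The points of the time strip `[a, b]` lying between the line `x = l` and the curve
`x = s t`. -/
def slab (a b l : ℝ) (s : ℝ → ℝ) : Set (ℝ × ℝ) :=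
  {q | q.1 ∈ Icc a b ∧ q.2 ∈ Icc l (s q.1)}

lemma isCompact_slab {a b l : ℝ} {s : ℝ → ℝ} (hs : ContinuousOn s (Icc a b)) :
    IsCompact (slab a b l s) := by
  obtain ⟨C, hC⟩ := isCompact_Icc.bddAbove_image hs
  have hclosed : IsClosed (Icc a b ×ˢ Icc l C ∩ (fun q : ℝ × ℝ => s q.1 - q.2) ⁻¹' Ici 0) :=
    ((hs.comp continuousOn_fst fun q hq => hq.1).sub continuousOn_snd).preimage_isClosed_of_isClosed
      (isClosed_Icc.prod isClosed_Icc) isClosed_Ici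
  have hslab : slab a b l s
      = Icc a b ×ˢ Icc l C ∩ (fun q : ℝ × ℝ => s q.1 - q.2) ⁻¹' Ici 0 := by
    ext q
    have hqC : q.1 ∈ Icc a b → s q.1 ≤ C := fun hq => hC (mem_image_of_mem s hq)
    simp only [slab, mem_ofPred_eq, mem_inter_iff, mem_prod, mem_preimage, mem_Ici, sub_nonneg,
      mem_Icc] at hqC ⊢
    grind
  rw [hslab]
  exact (isCompact_Icc.prod isCompact_Icc).of_isClosed_subset hclosed inter_subset_left

lemma eventually_mem_slab {a b l t x : ℝ} {s : ℝ → ℝ} (ht : t ∈ Icc a b) (hx : x ∈ Ioo l (s t)) :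
    ∀ᶠ y in 𝓝 x, (t, y) ∈ slab a b l s := by
  filter_upwards [Icc_mem_nhds hx.1 hx.2] with y hy using ⟨ht, hy⟩

lemma eventually_left_mem_slab {a b l t x : ℝ} {s : ℝ → ℝ} (hs : ContinuousOn s (Icc a b))
    (ht : t ∈ Ioc a b) (hx : x ∈ Ioo l (s t)) : ∀ᶠ τ in 𝓝[<] t, (τ, x) ∈ slab a b l s := by
  have htIcc : t ∈ Icc a b := ⟨ht.1.le, ht.2⟩
  have hcont : ContinuousWithinAt s (Ioo a t) t :=
    (hs t htIcc).mono fun τ hτ => ⟨hτ.1.le, hτ.2.le.trans ht.2⟩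
  rw [← nhdsWithin_Ioo_eq_nhdsLT ht.1]
  filter_upwards [hcont.eventually_const_lt hx.2, self_mem_nhdsWithin] with τ hτ hτt
  exact ⟨⟨hτt.1.le, hτt.2.le.trans ht.2⟩, hx.1.le, hτ.le⟩

namespace HeatAt

variable {f fx fxx : ℝ → ℝ → ℝ} {s : ℝ → ℝ} {t₀ b ρ m e x : ℝ}

-- The barrier `e + 2Pρ(b - x) - P(b - x)² + P(t₀ - t)` with `P = m / ρ²` equals at least `m` at
-- `x = b - ρ` and at `t = t₀ - ρ²`, and at least `e` on the curve.
lemma le_add_dist_of_le_boundary (hρ : 0 < ρ) (hm : 0 < m) (he : 0 ≤ e)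
    (hs : ContinuousOn s (Icc (t₀ - ρ ^ 2) t₀)) (hsb : ∀ t ∈ Icc (t₀ - ρ ^ 2) t₀, s t ≤ b)
    (hf : ContinuousOn (fun q : ℝ × ℝ => f q.1 q.2) (slab (t₀ - ρ ^ 2) t₀ (b - ρ) s))
    (hheat : ∀ t ∈ Icc (t₀ - ρ ^ 2) t₀, ∀ x ∈ Ioo (b - ρ) (s t), HeatAt f fx fxx t x)
    (hfm : ∀ q ∈ slab (t₀ - ρ ^ 2) t₀ (b - ρ) s, f q.1 q.2 ≤ m)
    (hfe : ∀ t ∈ Icc (t₀ - ρ ^ 2) t₀, f t (s t) ≤ e) (hx : x ∈ Icc (b - ρ) (s t₀)) :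
    f t₀ x ≤ e + 2 * m / ρ * (b - x) := by
  set P := m / ρ ^ 2 with hP
  have hP0 : 0 < P := by positivity
  have hPρ : P * ρ ^ 2 = m := by rw [hP]; field_simp
  set w : ℝ × ℝ → ℝ := fun q => f q.1 q.2 - ((e + 2 * P * ρ * b - P * b ^ 2 + P * t₀)
    + (2 * P * b - 2 * P * ρ) * q.2 + (-P) * q.2 ^ 2 + (-P) * q.1)
  have hw (t y : ℝ) : w (t, y)
      = f t y - (e + 2 * P * ρ * (b - y) - P * (b - y) ^ 2 + P * (t₀ - t)) := by
    simp only [w]; ring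
  have hwc : ContinuousOn w (slab (t₀ - ρ ^ 2) t₀ (b - ρ) s) :=
    hf.sub (Continuous.continuousOn (by fun_prop))
  have hnonpos := forall_nonpos_of_not_isMaxOn (isCompact_slab hs) hwc ?_ (t₀, x)
    ⟨⟨sub_le_self _ (sq_nonneg _), le_rfl⟩, hx⟩
  · rw [hw, sub_self, mul_zero, add_zero] at hnonpos
    have hlin : 2 * m / ρ = 2 * P * ρ := by rw [hP]; field_simp
    rw [hlin]
    nlinarith [mul_nonneg hP0.le (sq_nonneg (b - x))]
  rintro ⟨t, y⟩ ⟨ht, hy⟩ hpos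
  rw [hw] at hpos
  dsimp only at ht hy
  have hyb : y ≤ b := hy.2.trans (hsb t ht)
  have hyρ : b - y ≤ ρ := by linarith [hy.1]
  have hbarrier : 0 ≤ P * (b - y) * (ρ - (b - y)) :=
    mul_nonneg (mul_nonneg hP0.le (by linarith)) (by linarith)
  have hlin : 0 ≤ P * ρ * (b - y) := by have := sub_nonneg.2 hyb; positivity
  have htime : 0 ≤ P * (t₀ - t) := mul_nonneg hP0.le (by linarith [ht.2])
  have hym : f t y ≤ m := hfm (t, y) ⟨ht, hy⟩
  have hlt : t₀ - ρ ^ 2 < t := ht.1.lt_of_ne fun h => by subst h; nlinarith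
  have hly : b - ρ < y := hy.1.lt_of_ne fun h => by subst h; nlinarith
  have hys : y < s t := hy.2.lt_of_ne fun h => by have := hfe t ht; rw [← h] at this; nlinarith
  exact (hheat t ht y ⟨hly, hys⟩).not_isMaxOn_sub_quadratic (by linarith)
    (eventually_mem_slab ht ⟨hly, hys⟩) (eventually_left_mem_slab hs ⟨hlt, ht.2⟩ ⟨hly, hys⟩)

lemma abs_le_add_dist_of_abs_le_boundary (hρ : 0 < ρ) (hm : 0 < m) (he : 0 ≤ e)
    (hs : ContinuousOn s (Icc (t₀ - ρ ^ 2) t₀)) (hsb : ∀ t ∈ Icc (t₀ - ρ ^ 2) t₀, s t ≤ b)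
    (hf : ContinuousOn (fun q : ℝ × ℝ => f q.1 q.2) (slab (t₀ - ρ ^ 2) t₀ (b - ρ) s))
    (hheat : ∀ t ∈ Icc (t₀ - ρ ^ 2) t₀, ∀ x ∈ Ioo (b - ρ) (s t), HeatAt f fx fxx t x)
    (hfm : ∀ q ∈ slab (t₀ - ρ ^ 2) t₀ (b - ρ) s, |f q.1 q.2| ≤ m)
    (hfe : ∀ t ∈ Icc (t₀ - ρ ^ 2) t₀, |f t (s t)| ≤ e) (hx : x ∈ Icc (b - ρ) (s t₀)) :
    |f t₀ x| ≤ e + 2 * m / ρ * (b - x) :=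
  abs_le'.2 ⟨le_add_dist_of_le_boundary hρ hm he hs hsb hf hheat
      (fun q hq => (le_abs_self _).trans (hfm q hq))
      (fun t ht => (le_abs_self _).trans (hfe t ht)) hx,
    le_add_dist_of_le_boundary hρ hm he hs hsb hf.neg (fun t ht x hx => (hheat t ht x hx).neg)
      (fun q hq => (neg_le_abs _).trans (hfm q hq))
      (fun t ht => (neg_le_abs _).trans (hfe t ht)) hx⟩

end HeatAt

/-! ### Interior estimates -/

namespace HeatAt

variable {f fx fxx : ℝ → ℝ → ℝ} {t₀ x₀ r M : ℝ}

lemma fx_le_of_abs_le (hr : 0 < r) (hM : 0 < M)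
    (hf : ContinuousOn (fun q : ℝ × ℝ => f q.1 q.2)
      (Icc (t₀ - r ^ 2) t₀ ×ˢ Icc (x₀ - r) (x₀ + r)))
    (hheat : ∀ t ∈ Icc (t₀ - r ^ 2) t₀, ∀ x ∈ Ioo (x₀ - r) (x₀ + r), HeatAt f fx fxx t x)
    (hfM : ∀ t ∈ Icc (t₀ - r ^ 2) t₀, ∀ x ∈ Icc (x₀ - r) (x₀ + r), |f t x| ≤ M) :
    fx t₀ x₀ ≤ 2 * M / r := by
  -- The odd part of `f` about `x₀` vanishes at `x₀`, so the boundary barrier controls its slope.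
  have ht₀ : t₀ ∈ Icc (t₀ - r ^ 2) t₀ := ⟨by linarith [sq_nonneg r], le_rfl⟩
  have hsub {y : ℝ} (hy : y ∈ Icc (0 - r) 0) : x₀ - y ∈ Icc (x₀ - r) (x₀ + r) :=
    ⟨by linarith [hy.2], by linarith [hy.1]⟩
  have hadd {y : ℝ} (hy : y ∈ Icc (0 - r) 0) : y + x₀ ∈ Icc (x₀ - r) (x₀ + r) :=
    ⟨by linarith [hy.1], by linarith [hy.2]⟩
  have hodd {y : ℝ} (hy : y ∈ Icc (0 - r) 0) :
      f t₀ (x₀ - y) - f t₀ (y + x₀) ≤ 0 + 2 * (2 * M) / r * (0 - y) := by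
    refine le_add_dist_of_le_boundary (f := fun t y => f t (x₀ - y) - f t (y + x₀))
      (s := fun _ => 0) hr (by positivity) le_rfl continuousOn_const (fun _ _ => le_rfl) ?_
      (fun t ht y hy => (comp_const_sub (hheat t ht _ ?_)).sub (comp_add_const (hheat t ht _ ?_)))
      (fun q hq => ?_) (fun t _ => by simp) hy
    · exact (hf.comp (f := fun q : ℝ × ℝ => (q.1, x₀ - q.2)) (by fun_prop)
        fun q hq => ⟨hq.1, hsub hq.2⟩).sub
        (hf.comp (f := fun q : ℝ × ℝ => (q.1, q.2 + x₀)) (by fun_prop)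
          fun q hq => ⟨hq.1, hadd hq.2⟩)
    · exact ⟨by linarith [hy.2], by linarith [hy.1]⟩
    · exact ⟨by linarith [hy.1], by linarith [hy.2]⟩
    · have h₁ := abs_le.1 (hfM q.1 hq.1 _ (hsub hq.2))
      have h₂ := abs_le.1 (hfM q.1 hq.1 _ (hadd hq.2))
      linarith [h₁.2, h₂.1]
  refine le_of_eventually_symm_sub_le
    (hheat t₀ ht₀ x₀ ⟨by linarith, by linarith⟩).hasDerivAt ?_
  filter_upwards [Ioo_mem_nhdsGT hr] with y hy
  have := hodd (y := -y) ⟨by linarith [hy.2], by linarith [hy.1]⟩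
  rw [sub_neg_eq_add, add_comm x₀, neg_add_eq_sub] at this
  exact this.trans_eq (by ring)

lemma abs_fx_le_of_abs_le (hr : 0 < r) (hM : 0 < M)
    (hf : ContinuousOn (fun q : ℝ × ℝ => f q.1 q.2)
      (Icc (t₀ - r ^ 2) t₀ ×ˢ Icc (x₀ - r) (x₀ + r)))
    (hheat : ∀ t ∈ Icc (t₀ - r ^ 2) t₀, ∀ x ∈ Ioo (x₀ - r) (x₀ + r), HeatAt f fx fxx t x)
    (hfM : ∀ t ∈ Icc (t₀ - r ^ 2) t₀, ∀ x ∈ Icc (x₀ - r) (x₀ + r), |f t x| ≤ M) :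
    |fx t₀ x₀| ≤ 2 * M / r :=
  abs_le'.2 ⟨fx_le_of_abs_le hr hM hf hheat hfM,
    fx_le_of_abs_le hr hM hf.neg (fun t ht x hx => (hheat t ht x hx).neg)
      fun t ht x hx => by simpa using hfM t ht x hx⟩

lemma abs_space_diff_quotient_fx_le {k : ℝ} (hr : 0 < r) (hM : 0 < M) (hk : 0 < k)
    (hkr : k ≤ r)
    (hf : ContinuousOn (fun q : ℝ × ℝ => f q.1 q.2)
      (Icc (t₀ - r ^ 2) t₀ ×ˢ Icc (x₀ - r) (x₀ + 2 * r)))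
    (hheat : ∀ t ∈ Icc (t₀ - r ^ 2) t₀, ∀ x ∈ Icc (x₀ - r) (x₀ + 2 * r), HeatAt f fx fxx t x)
    (hfxM : ∀ t ∈ Icc (t₀ - r ^ 2) t₀, ∀ x ∈ Icc (x₀ - r) (x₀ + 2 * r), |fx t x| ≤ M) :
    |(fx t₀ (x₀ + k) - fx t₀ x₀) / k| ≤ 2 * M / r := by
  have hleft : Icc (x₀ - r) (x₀ + r) ⊆ Icc (x₀ - r) (x₀ + 2 * r) :=
    Icc_subset_Icc_right (by linarith)
  have hright {x : ℝ} (hx : x ∈ Icc (x₀ - r) (x₀ + r)) : x + k ∈ Icc (x₀ - r) (x₀ + 2 * r) :=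
    ⟨by linarith [hx.1], by linarith [hx.2]⟩
  refine abs_fx_le_of_abs_le (f := fun t x => (f t (x + k) - f t x) / k)
    (fx := fun t x => (fx t (x + k) - fx t x) / k) (fxx := fun t x => (fxx t (x + k) - fxx t x) / k)
    hr hM ?_ (fun t ht x hx => ?_) fun t ht x hx => ?_
  · exact ((hf.comp (f := fun q : ℝ × ℝ => (q.1, q.2 + k)) (by fun_prop)
      fun q hq => ⟨hq.1, hright hq.2⟩).sub (hf.mono (prod_mono_right hleft))).div_const k
  · have hx' := Ioo_subset_Icc_self hx
    exact (hheat t ht x (hleft hx')).space_diff_quotient (hheat t ht _ (hright hx'))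
  · have hlip := (convex_Icc (x₀ - r) (x₀ + 2 * r)).norm_image_sub_le_of_norm_hasDerivWithin_le
      (fun z hz => (hheat t ht z hz).hasDerivAt.hasDerivWithinAt) (hfxM t ht) (hleft hx) (hright hx)
    rw [add_sub_cancel_left, norm_eq_abs, norm_eq_abs, abs_of_pos hk] at hlip
    rwa [abs_div, abs_of_pos hk, div_le_iff₀ hk]

lemma abs_fxx_le_of_abs_fx_le (hr : 0 < r) (hM : 0 < M)
    (hf : ContinuousOn (fun q : ℝ × ℝ => f q.1 q.2)
      (Icc (t₀ - r ^ 2) t₀ ×ˢ Icc (x₀ - r) (x₀ + 2 * r)))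
    (hheat : ∀ t ∈ Icc (t₀ - r ^ 2) t₀, ∀ x ∈ Icc (x₀ - r) (x₀ + 2 * r), HeatAt f fx fxx t x)
    (hfxM : ∀ t ∈ Icc (t₀ - r ^ 2) t₀, ∀ x ∈ Icc (x₀ - r) (x₀ + 2 * r), |fx t x| ≤ M) :
    |fxx t₀ x₀| ≤ 2 * M / r := by
  have hderiv := (hheat t₀ ⟨by linarith [sq_nonneg r], le_rfl⟩ x₀
    ⟨by linarith, by linarith⟩).hasDerivAt_fx.hasDerivWithinAt (s := Ioi x₀)
  rw [hasDerivWithinAt_iff_tendsto_slope' self_notMem_Ioi] at hderiv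
  refine le_of_tendsto hderiv.abs ?_
  filter_upwards [Ioo_mem_nhdsGT (by linarith : x₀ < x₀ + r)] with y hy
  have hquot := abs_space_diff_quotient_fx_le (k := y - x₀) hr hM (by linarith [hy.1])
    (by linarith [hy.2]) hf hheat hfxM
  rwa [add_sub_cancel, ← slope_def_field] at hquot

lemma abs_fxx_le_of_abs_le (hr : 0 < r) (hM : 0 < M)
    (hf : ContinuousOn (fun q : ℝ × ℝ => f q.1 q.2)
      (Icc (t₀ - r ^ 2) t₀ ×ˢ Icc (x₀ - r) (x₀ + r)))
    (hheat : ∀ t ∈ Icc (t₀ - r ^ 2) t₀, ∀ x ∈ Ioo (x₀ - r) (x₀ + r), HeatAt f fx fxx t x)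
    (hfM : ∀ t ∈ Icc (t₀ - r ^ 2) t₀, ∀ x ∈ Icc (x₀ - r) (x₀ + r), |f t x| ≤ M) :
    |fxx t₀ x₀| ≤ 36 * M / r ^ 2 := by
  have hr3 : 0 < r / 3 := by positivity
  have htime {t : ℝ} (ht : t ∈ Icc (t₀ - (r / 3) ^ 2) t₀) :
      Icc (t - (r / 3) ^ 2) t ⊆ Icc (t₀ - r ^ 2) t₀ :=
    Icc_subset_Icc (by nlinarith [ht.1]) ht.2
  have hspace {x : ℝ} (hx : x ∈ Icc (x₀ - r / 3) (x₀ + 2 * (r / 3))) :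
      Icc (x - r / 3) (x + r / 3) ⊆ Icc (x₀ - r) (x₀ + r) :=
    Icc_subset_Icc (by linarith [hx.1]) (by linarith [hx.2])
  have hgrad : ∀ t ∈ Icc (t₀ - (r / 3) ^ 2) t₀, ∀ x ∈ Icc (x₀ - r / 3) (x₀ + 2 * (r / 3)),
      |fx t x| ≤ 2 * M / (r / 3) := fun t ht x hx =>
    abs_fx_le_of_abs_le hr3 hM (hf.mono (prod_mono (htime ht) (hspace hx)))
      (fun τ hτ y hy => hheat τ (htime ht hτ) y
        ⟨by linarith [hx.1, hy.1], by linarith [hx.2, hy.2]⟩)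
      fun τ hτ y hy => hfM τ (htime ht hτ) y (hspace hx hy)
  have hhess := abs_fxx_le_of_abs_fx_le hr3 (by positivity) (hf.mono (prod_mono
    (Icc_subset_Icc_left (by nlinarith)) (Icc_subset_Icc (by linarith) (by linarith))))
    (fun t ht x hx => hheat t ⟨by nlinarith [ht.1], ht.2⟩ x
      ⟨by linarith [hx.1], by linarith [hx.2]⟩) hgrad
  refine hhess.trans_eq ?_
  field_simp; norm_num

-- Where the oscillation in time is small, `fxx` is small at an intermediate time by the mean value
-- theorem, and the Hessian estimate for a time difference of `f` transports this to `t₀`.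
lemma abs_fxx_le_of_time_osc_le (hr : 0 < r) (hM : 0 < M)
    (hf : ContinuousOn (fun q : ℝ × ℝ => f q.1 q.2)
      (Icc (t₀ - 2 * r ^ 2) t₀ ×ˢ Icc (x₀ - r) (x₀ + r)))
    (hheat : ∀ t ∈ Icc (t₀ - 2 * r ^ 2) t₀, ∀ x ∈ Ioo (x₀ - r) (x₀ + r), HeatAt f fx fxx t x)
    (hosc : ∀ t₁ ∈ Icc (t₀ - 2 * r ^ 2) t₀, ∀ t₂ ∈ Icc (t₀ - 2 * r ^ 2) t₀, t₁ < t₂ →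
      ∀ x ∈ Icc (x₀ - r) (x₀ + r), |f t₂ x - f t₁ x| ≤ M) :
    |fxx t₀ x₀| ≤ 37 * M / r ^ 2 := by
  have hr2 : 0 < r ^ 2 := by positivity
  have hx₀ : x₀ ∈ Ioo (x₀ - r) (x₀ + r) := ⟨by linarith, by linarith⟩
  have hdt {t : ℝ} (ht : t ∈ Icc (t₀ - r ^ 2) t₀) : HasDerivAt (fun τ => f τ x₀) (fxx t x₀) t :=
    (hheat t ⟨by linarith [ht.1], ht.2⟩ x₀ hx₀).hasDerivAt_time
  obtain ⟨c, hc, hslope⟩ := exists_hasDerivAt_eq_slope (fun τ => f τ x₀) (fun τ => fxx τ x₀)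
    (by linarith : t₀ - r ^ 2 < t₀) (fun t ht => (hdt ht).continuousAt.continuousWithinAt)
    (fun t ht => hdt (Ioo_subset_Icc_self ht))
  have hc_le : |fxx c x₀| ≤ M / r ^ 2 := by
    rw [hslope, abs_div, sub_sub_cancel, abs_of_pos hr2]
    gcongr
    exact hosc _ ⟨by linarith, by linarith⟩ _ ⟨by linarith, le_rfl⟩ (by linarith) x₀
      (Ioo_subset_Icc_self hx₀)
  obtain ⟨k, hk, rfl⟩ : ∃ k, 0 < k ∧ t₀ = c + k := ⟨t₀ - c, sub_pos.2 hc.2, by ring⟩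
  have hmem {t : ℝ} (ht : t ∈ Icc (c - r ^ 2) c) : t ∈ Icc (c + k - 2 * r ^ 2) (c + k) :=
    ⟨by linarith [ht.1, hc.1], by linarith [ht.2]⟩
  have hmem' {t : ℝ} (ht : t ∈ Icc (c - r ^ 2) c) : t + k ∈ Icc (c + k - 2 * r ^ 2) (c + k) :=
    ⟨by linarith [ht.1], by linarith [ht.2]⟩
  have hdiff : |fxx (c + k) x₀ - fxx c x₀| ≤ 36 * M / r ^ 2 :=
    abs_fxx_le_of_abs_le (f := fun t x => f (t + k) x - f t x)
      (fx := fun t x => fx (t + k) x - fx t x) (fxx := fun t x => fxx (t + k) x - fxx t x) hr hM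
      ((hf.comp (f := fun q : ℝ × ℝ => (q.1 + k, q.2)) (by fun_prop)
        fun q hq => ⟨hmem' hq.1, hq.2⟩).sub (hf.mono fun q hq => ⟨hmem hq.1, hq.2⟩))
      (fun t ht x hx => (hheat t (hmem ht) x hx).time_diff (hheat _ (hmem' ht) x hx))
      fun t ht x hx => hosc t (hmem ht) _ (hmem' ht) (by linarith) x hx
  calc |fxx (c + k) x₀| ≤ |fxx (c + k) x₀ - fxx c x₀| + |fxx c x₀| := by
        simpa using abs_add_le (fxx (c + k) x₀ - fxx c x₀) (fxx c x₀)
    _ ≤ 36 * M / r ^ 2 + M / r ^ 2 := add_le_add hdiff hc_le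
    _ = 37 * M / r ^ 2 := by ring

end HeatAt

/-! ### Gradient estimate under a Neumann condition -/

-- Reflecting the argument at `0` turns the derivative at `0` into a kink, which the kink of
-- `2 * m * min y a` outweighs.
lemma not_isLocalMax_of_reflection_kink {g q : ℝ → ℝ} {a d e m q' : ℝ}
    (hg₀ : HasDerivWithinAt g d (Ici 0) 0) (hg : HasDerivAt g e (a + a)) (hq : HasDerivAt q q' a)
    (hdm : d < m) :
    ¬IsLocalMax (fun y => g (y + a) - g |a - y| - (q y + 2 * m * min y a)) a := by
  intro hmax
  have hadd : HasDerivAt (fun y => g (y + a)) e a := HasDerivAt.comp_add_const a a hg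
  have hright : HasDerivWithinAt (fun y => g (y + a) - g |a - y| - (q y + 2 * m * min y a))
      (e - d * 1 - (q' + 0)) (Ici a) a := by
    have hrefl : HasDerivWithinAt (fun y => g |a - y|) (d * 1) (Ici a) a :=
      HasDerivWithinAt.comp_of_eq a hg₀ (((hasDerivAt_id' a).sub_const a).hasDerivWithinAt.congr
        (fun y hy => by rw [abs_sub_comm, abs_of_nonneg (sub_nonneg.2 hy)]) (by simp))
        (fun y _ => mem_Ici.2 (abs_nonneg _)) (by simp)
    have hmin : HasDerivWithinAt (fun y => 2 * m * min y a) 0 (Ici a) a :=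
      (hasDerivWithinAt_const a _ (2 * m * a)).congr (fun y hy => by rw [min_eq_right hy]) (by simp)
    exact (hadd.hasDerivWithinAt.fun_sub hrefl).fun_sub (hq.hasDerivWithinAt.fun_add hmin)
  have hleft : HasDerivWithinAt (fun y => g (y + a) - g |a - y| - (q y + 2 * m * min y a))
      (e - d * (-1) - (q' + 2 * m)) (Iic a) a := by
    have hrefl : HasDerivWithinAt (fun y => g |a - y|) (d * (-1)) (Iic a) a :=
      HasDerivWithinAt.comp_of_eq a hg₀ (((hasDerivAt_id' a).const_sub a).hasDerivWithinAt.congr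
        (fun y hy => by rw [abs_of_nonneg (sub_nonneg.2 hy)]) (by simp))
        (fun y _ => mem_Ici.2 (abs_nonneg _)) (by simp)
    have hmin : HasDerivWithinAt (fun y => 2 * m * min y a) (2 * m) (Iic a) a :=
      (hasDerivAt_const_mul (2 * m)).hasDerivWithinAt.congr (fun y hy => by rw [min_eq_left hy])
        (by simp)
    exact (hadd.hasDerivWithinAt.fun_sub hrefl).fun_sub (hq.hasDerivWithinAt.fun_add hmin)
  have h₁ := nonpos_of_isLocalMaxOn_Ici (hmax.on _) hright
  have h₂ := nonneg_of_isLocalMaxOn_Iic (hmax.on _) hleft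
  linarith

namespace HeatAt

variable {f fx fxx : ℝ → ℝ → ℝ} {t₀ x₀ r M m a b c d t y : ℝ} {S : Set (ℝ × ℝ)}

lemma not_isMaxOn_reflection_sub_barrier (hcd : 2 * c < d) (hy : 0 < y) (hx₀ : 0 < x₀)
    (hheat : ∀ x ∈ Ioc 0 (y + x₀), HeatAt f fx fxx t x)
    (hf₀ : HasDerivWithinAt (f t) (fx t 0) (Ici 0) 0) (hm : fx t 0 < m)
    (hspace : ∀ᶠ z in 𝓝 y, (t, z) ∈ S) (htime : ∀ᶠ τ in 𝓝[<] t, (τ, y) ∈ S) :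
    ¬IsMaxOn (fun q : ℝ × ℝ => f q.1 (q.2 + x₀) - f q.1 |x₀ - q.2|
      - (a + b * q.2 + c * q.2 ^ 2 + d * q.1 + 2 * m * min q.2 x₀)) S (t, y) := by
  intro hmax
  have hadd : HeatAt (fun t y => f t (y + x₀)) (fun t y => fx t (y + x₀))
      (fun t y => fxx t (y + x₀)) t y := comp_add_const (hheat _ ⟨by linarith, le_rfl⟩)
  rcases lt_trichotomy y x₀ with hlt | rfl | hgt
  · refine (hadd.sub (comp_const_sub (k := x₀) (hheat _ ⟨by linarith, by linarith⟩)))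
      |>.not_isMaxOn_sub_quadratic (S := S ∩ {q | q.2 < x₀}) (a := a) (b := b + 2 * m) hcd
      (hspace.and (gt_mem_nhds hlt)) (htime.mono fun τ hτ => ⟨hτ, hlt⟩) fun q hq => ?_
    have hle := hmax hq.1
    have hqx : q.2 < x₀ := hq.2
    simp only [mem_ofPred_eq, abs_of_pos (sub_pos.2 hqx), abs_of_pos (sub_pos.2 hlt),
      min_eq_left hqx.le, min_eq_left hlt.le] at hle ⊢
    linarith
  · refine not_isLocalMax_of_reflection_kink (q := fun z => a + b * z + c * z ^ 2 + d * t) hf₀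
      (hheat (y + y) ⟨by linarith, le_rfl⟩).hasDerivAt (DifferentiableAt.hasDerivAt (by fun_prop))
      hm (hspace.mono fun z hz => hmax hz)
  · refine (hadd.sub (comp_add_const (k := -x₀) (hheat _ ⟨by linarith, by linarith⟩)))
      |>.not_isMaxOn_sub_quadratic (S := S ∩ {q | x₀ < q.2}) (a := a + 2 * m * x₀) (b := b) hcd
      (hspace.and (lt_mem_nhds hgt)) (htime.mono fun τ hτ => ⟨hτ, hgt⟩) fun q hq => ?_
    have hle := hmax hq.1
    have hqx : x₀ < q.2 := hq.2
    have habs {z : ℝ} (hz : x₀ < z) : |x₀ - z| = z + -x₀ := by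
      rw [abs_sub_comm, abs_of_pos (sub_pos.2 hz), sub_eq_add_neg]
    simp only [mem_ofPred_eq, habs hqx, habs hgt, min_eq_right hqx.le, min_eq_right hgt.le] at hle ⊢
    linarith

lemma add_mem_Icc_of_mem (hx₀ : 0 ≤ x₀) (hy : y ∈ Icc 0 r) : y + x₀ ∈ Icc 0 (x₀ + r) :=
  ⟨by linarith [hy.1], by linarith [hy.2]⟩

lemma abs_sub_mem_Icc_of_mem (hx₀ : 0 ≤ x₀) (hy : y ∈ Icc 0 r) : |x₀ - y| ∈ Icc 0 (x₀ + r) :=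
  ⟨abs_nonneg _, abs_le.2 ⟨by linarith [hy.2], by linarith [hy.1, hy.2]⟩⟩

lemma continuousOn_reflection_sub {I : Set ℝ} (hx₀ : 0 ≤ x₀)
    (hf : ContinuousOn (fun q : ℝ × ℝ => f q.1 q.2) (I ×ˢ Icc 0 (x₀ + r))) :
    ContinuousOn (fun q : ℝ × ℝ => f q.1 (q.2 + x₀) - f q.1 |x₀ - q.2|) (I ×ˢ Icc 0 r) :=
  (hf.comp (f := fun q : ℝ × ℝ => (q.1, q.2 + x₀)) (by fun_prop)
    fun q hq => ⟨hq.1, add_mem_Icc_of_mem hx₀ hq.2⟩).sub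
  (hf.comp (f := fun q : ℝ × ℝ => (q.1, |x₀ - q.2|)) (by fun_prop)
    fun q hq => ⟨hq.1, abs_sub_mem_Icc_of_mem hx₀ hq.2⟩)

-- The barrier for `f t (x₀ + y) - f t |x₀ - y|` is `2Pry - Py² + P(t₀ - t) + 2m min(y, x₀)` with
-- `P = 2M / r²`.
lemma reflection_sub_le_of_neumann (hM : 0 < M) (hm : 0 ≤ m) (hx₀ : x₀ ∈ Ioo 0 r)
    (hf : ContinuousOn (fun q : ℝ × ℝ => f q.1 q.2) (Icc (t₀ - r ^ 2) t₀ ×ˢ Icc 0 (x₀ + r)))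
    (hheat : ∀ t ∈ Icc (t₀ - r ^ 2) t₀, ∀ x ∈ Ioo 0 (x₀ + r), HeatAt f fx fxx t x)
    (hfM : ∀ t ∈ Icc (t₀ - r ^ 2) t₀, ∀ x ∈ Icc 0 (x₀ + r), |f t x| ≤ M)
    (hf₀ : ∀ t ∈ Icc (t₀ - r ^ 2) t₀, HasDerivWithinAt (f t) (fx t 0) (Ici 0) 0)
    (hfm : ∀ t ∈ Icc (t₀ - r ^ 2) t₀, fx t 0 < m) (hy : y ∈ Icc 0 r) :
    f t₀ (y + x₀) - f t₀ |x₀ - y| ≤ 2 * (2 * M / r + m) * y := by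
  obtain ⟨hx₀, hxr⟩ := hx₀
  have hr : 0 < r := hx₀.trans hxr
  set P := 2 * M / r ^ 2 with hP
  have hP0 : 0 < P := by positivity
  have hPr : P * r ^ 2 = 2 * M := by rw [hP]; field_simp
  have hwc : ContinuousOn (fun q : ℝ × ℝ => f q.1 (q.2 + x₀) - f q.1 |x₀ - q.2|
      - (P * t₀ + 2 * P * r * q.2 + (-P) * q.2 ^ 2 + (-P) * q.1 + 2 * m * min q.2 x₀))
      (Icc (t₀ - r ^ 2) t₀ ×ˢ Icc 0 r) :=
    (continuousOn_reflection_sub hx₀.le hf).sub (Continuous.continuousOn (by fun_prop))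
  have hnonpos := forall_nonpos_of_not_isMaxOn (isCompact_Icc.prod isCompact_Icc) hwc ?_ (t₀, y)
    ⟨⟨sub_le_self _ (sq_nonneg _), le_rfl⟩, hy⟩
  · have hlin : 2 * M / r = P * r := by rw [hP]; field_simp
    have hmin := mul_le_mul_of_nonneg_left (min_le_left y x₀) hm
    dsimp only at hnonpos
    rw [hlin]
    nlinarith [mul_nonneg hP0.le (sq_nonneg y)]
  rintro ⟨t, z⟩ ⟨ht, hz⟩ hpos
  dsimp only at ht hz hpos
  have hwM : f t (z + x₀) - f t |x₀ - z| ≤ 2 * M := by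
    linarith [abs_le.1 (hfM t ht _ (add_mem_Icc_of_mem hx₀.le hz)),
      abs_le.1 (hfM t ht _ (abs_sub_mem_Icc_of_mem hx₀.le hz))]
  have hmin : 0 ≤ m * min z x₀ := mul_nonneg hm (le_min hz.1 hx₀.le)
  have htime : 0 ≤ P * (t₀ - t) := mul_nonneg hP0.le (by linarith [ht.2])
  have hquad : 0 ≤ P * z * (r - z) := mul_nonneg (mul_nonneg hP0.le hz.1) (by linarith [hz.2])
  have hlin : 0 ≤ P * r * z := mul_nonneg (by positivity) hz.1
  have hlt : t₀ - r ^ 2 < t := ht.1.lt_of_ne fun h => by subst h; nlinarith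
  have hz0 : 0 < z := hz.1.lt_of_ne fun h => by
    subst h
    simp only [zero_add, sub_zero, abs_of_pos hx₀, min_eq_left hx₀.le] at hpos
    linarith
  have hzr : z < r := hz.2.lt_of_ne fun h => by subst h; nlinarith
  refine not_isMaxOn_reflection_sub_barrier (by linarith) hz0 hx₀
    (fun x hx => hheat t ht x ⟨hx.1, by linarith [hx.2]⟩) (hf₀ t ht) (hfm t ht) ?_ ?_
  · filter_upwards [Icc_mem_nhds hz0 hzr] with z' hz' using ⟨ht, hz'⟩
  · filter_upwards [Ioo_mem_nhdsLT hlt] with τ hτ using ⟨⟨hτ.1.le, hτ.2.le.trans ht.2⟩, hz⟩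

lemma fx_le_of_neumann (hM : 0 < M) (hm : 0 ≤ m) (hx₀ : x₀ ∈ Ioo 0 r)
    (hf : ContinuousOn (fun q : ℝ × ℝ => f q.1 q.2) (Icc (t₀ - r ^ 2) t₀ ×ˢ Icc 0 (x₀ + r)))
    (hheat : ∀ t ∈ Icc (t₀ - r ^ 2) t₀, ∀ x ∈ Ioo 0 (x₀ + r), HeatAt f fx fxx t x)
    (hfM : ∀ t ∈ Icc (t₀ - r ^ 2) t₀, ∀ x ∈ Icc 0 (x₀ + r), |f t x| ≤ M)
    (hf₀ : ∀ t ∈ Icc (t₀ - r ^ 2) t₀, HasDerivWithinAt (f t) (fx t 0) (Ici 0) 0)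
    (hfm : ∀ t ∈ Icc (t₀ - r ^ 2) t₀, fx t 0 ≤ m) : fx t₀ x₀ ≤ 2 * M / r + m := by
  refine le_of_forall_pos_le_add fun ε hε => ?_
  have ht₀ : t₀ ∈ Icc (t₀ - r ^ 2) t₀ := ⟨by linarith [sq_nonneg r], le_rfl⟩
  refine le_of_eventually_symm_sub_le
    (hheat t₀ ht₀ x₀ ⟨hx₀.1, by linarith [hx₀.1, hx₀.2]⟩).hasDerivAt ?_
  filter_upwards [Ioo_mem_nhdsGT hx₀.1] with y hy
  have hle := reflection_sub_le_of_neumann (m := m + ε) hM (by positivity) hx₀ hf hheat hfM hf₀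
    (fun t ht => (hfm t ht).trans_lt (by linarith)) ⟨hy.1.le, (hy.2.trans hx₀.2).le⟩
  rwa [abs_of_pos (sub_pos.2 hy.2), ← add_assoc] at hle

lemma abs_fx_le_of_neumann (hM : 0 < M) (hm : 0 ≤ m) (hx₀ : x₀ ∈ Ioo 0 r)
    (hf : ContinuousOn (fun q : ℝ × ℝ => f q.1 q.2) (Icc (t₀ - r ^ 2) t₀ ×ˢ Icc 0 (x₀ + r)))
    (hheat : ∀ t ∈ Icc (t₀ - r ^ 2) t₀, ∀ x ∈ Ioo 0 (x₀ + r), HeatAt f fx fxx t x)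
    (hfM : ∀ t ∈ Icc (t₀ - r ^ 2) t₀, ∀ x ∈ Icc 0 (x₀ + r), |f t x| ≤ M)
    (hf₀ : ∀ t ∈ Icc (t₀ - r ^ 2) t₀, HasDerivWithinAt (f t) (fx t 0) (Ici 0) 0)
    (hfm : ∀ t ∈ Icc (t₀ - r ^ 2) t₀, |fx t 0| ≤ m) : |fx t₀ x₀| ≤ 2 * M / r + m :=
  abs_le'.2 ⟨fx_le_of_neumann hM hm hx₀ hf hheat hfM hf₀
      fun t ht => (le_abs_self _).trans (hfm t ht),
    fx_le_of_neumann hM hm hx₀ hf.neg (fun t ht x hx => (hheat t ht x hx).neg)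
      (fun t ht x hx => by simpa using hfM t ht x hx) (fun t ht => (hf₀ t ht).fun_neg)
      fun t ht => (neg_le_abs _).trans (hfm t ht)⟩

end HeatAt

/-! ### Hölder continuity in time -/

lemma mem_Ioo_of_isMaxOn {g : ℝ → ℝ} {g' a b x : ℝ} (hmax : IsMaxOn g (Icc a b) x)
    (hg : HasDerivAt g g' x) (hab : a < b) (hx : x ∈ Icc a b) (ha : x = a → 0 < g')
    (hb : x = b → g' < 0) : x ∈ Ioo a b := by
  refine ⟨hx.1.lt_of_ne fun h => ?_, hx.2.lt_of_ne fun h => ?_⟩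
  · subst h
    refine (ha rfl).not_ge (nonpos_of_isLocalMaxOn_Ici ?_ hg.hasDerivWithinAt)
    filter_upwards [Icc_mem_nhdsGE hab] with y hy using hmax hy
  · subst h
    refine (hb rfl).not_ge (nonneg_of_isLocalMaxOn_Iic ?_ hg.hasDerivWithinAt)
    filter_upwards [Icc_mem_nhdsLE hab] with y hy using hmax hy

namespace HeatAt

variable {f fx fxx : ℝ → ℝ → ℝ} {t₁ t₂ x₁ r L x : ℝ}

lemma lipschitz_of_abs_fx_le {t y : ℝ} (hheat : ∀ z ∈ Icc x₁ (x₁ + r), HeatAt f fx fxx t z)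
    (hfx : ∀ z ∈ Icc x₁ (x₁ + r), |fx t z| ≤ L) (hL : 0 ≤ L) (hx : x ∈ Icc x₁ (x₁ + r))
    (hy : y ∈ Icc x₁ (x₁ + r)) : f t y - f t x ≤ L * r := by
  have hlip := (convex_Icc x₁ (x₁ + r)).norm_image_sub_le_of_norm_hasDerivWithin_le
    (fun z hz => (hheat z hz).hasDerivAt.hasDerivWithinAt) hfx hx hy
  have hyx : ‖y - x‖ ≤ r := abs_le.2 ⟨by linarith [hy.1, hx.2], by linarith [hy.2, hx.1]⟩
  exact (le_abs_self _).trans (hlip.trans (by gcongr))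

-- The lateral derivatives `∓2L` of the barrier `2L/r (y - x₁ - r/2)²` exceed the gradient bound, so
-- no boundary values of `f` are needed.
lemma time_diff_le_of_abs_fx_le (hr : 0 < r) (hL : 0 < L) (ht : t₁ ≤ t₂)
    (hf : ContinuousOn (fun q : ℝ × ℝ => f q.1 q.2) (Icc t₁ t₂ ×ˢ Icc x₁ (x₁ + r)))
    (hheat : ∀ t ∈ Icc t₁ t₂, ∀ x ∈ Icc x₁ (x₁ + r), HeatAt f fx fxx t x)
    (hfx : ∀ t ∈ Icc t₁ t₂, ∀ x ∈ Icc x₁ (x₁ + r), |fx t x| ≤ L) (hx : x ∈ Icc x₁ (x₁ + r)) :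
    f t₂ x - f t₁ x ≤ 2 * L * r + 5 * L / r * (t₂ - t₁) := by
  set c := L / r with hc
  have hc0 : 0 < c := by positivity
  have hcr : c * r = L := by rw [hc]; field_simp
  set z := x₁ + r / 2 with hz
  set w : ℝ × ℝ → ℝ := fun q => f q.1 q.2 - ((f t₁ x + L * r + 2 * c * z ^ 2 - 5 * c * t₁)
    + (-(4 * c * z)) * q.2 + 2 * c * q.2 ^ 2 + 5 * c * q.1) with hwdef
  have hw (t y : ℝ) : w (t, y)
      = f t y - (f t₁ x + L * r + 2 * c * (y - z) ^ 2 + 5 * c * (t - t₁)) := by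
    simp only [hwdef]; ring
  have hwc : ContinuousOn w (Icc t₁ t₂ ×ˢ Icc x₁ (x₁ + r)) :=
    hf.sub (Continuous.continuousOn (by fun_prop))
  have hnonpos := forall_nonpos_of_not_isMaxOn (isCompact_Icc.prod isCompact_Icc) hwc ?_ (t₂, x)
    ⟨⟨ht, le_rfl⟩, hx⟩
  · rw [hw] at hnonpos
    have hmid : (x - z) ^ 2 ≤ (r / 2) ^ 2 := sq_le_sq' (by linarith [hx.1]) (by linarith [hx.2])
    rw [mul_div_assoc, ← hc]
    nlinarith
  rintro ⟨t, y⟩ ⟨htm, hy⟩ hpos hmax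
  rw [hw] at hpos
  dsimp only at htm hy
  have hlt : t₁ < t := htm.1.lt_of_ne fun h => by
    have := lipschitz_of_abs_fx_le (hheat t₁ ⟨le_rfl, ht⟩) (hfx t₁ ⟨le_rfl, ht⟩) hL.le hx hy
    rw [← h] at hpos
    nlinarith [mul_nonneg hc0.le (sq_nonneg (y - z))]
  have hfxy := abs_le.1 (hfx t htm y hy)
  have hyI : y ∈ Ioo x₁ (x₁ + r) := by
    have hdw : HasDerivAt (fun v => w (t, v)) (fx t y - (-(4 * c * z) + 2 * (2 * c) * y)) y :=
      (hheat t htm y hy).hasDerivAt.fun_sub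
        (hasDerivAt_quadratic (b := -(4 * c * z)) (c := 2 * c) (d := 5 * c * t))
    refine mem_Ioo_of_isMaxOn (fun v hv => hmax ⟨htm, hv⟩) hdw (by linarith) hy ?_ ?_ <;>
    · intro h
      nlinarith
  refine (hheat t htm y hy).not_isMaxOn_sub_quadratic (by linarith) ?_ ?_ hmax
  · filter_upwards [Icc_mem_nhds hyI.1 hyI.2] with v hv using ⟨htm, hv⟩
  · filter_upwards [Ioo_mem_nhdsLT hlt] with τ hτ using ⟨⟨hτ.1.le, hτ.2.le.trans htm.2⟩, hy⟩

lemma abs_time_diff_le_of_abs_fx_le {t h : ℝ} (hL : 0 < L) (hh : 0 < h)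
    (hf : ContinuousOn (fun q : ℝ × ℝ => f q.1 q.2) (Icc t (t + h) ×ˢ Icc x₁ (x₁ + √h)))
    (hheat : ∀ τ ∈ Icc t (t + h), ∀ x ∈ Icc x₁ (x₁ + √h), HeatAt f fx fxx τ x)
    (hfx : ∀ τ ∈ Icc t (t + h), ∀ x ∈ Icc x₁ (x₁ + √h), |fx τ x| ≤ L)
    (hx : x ∈ Icc x₁ (x₁ + √h)) : |f (t + h) x - f t x| ≤ 7 * L * √h := by
  have hpos : 0 < √h := sqrt_pos.2 hh
  have hconst : 2 * L * √h + 5 * L / √h * (t + h - t) = 7 * L * √h := by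
    rw [add_sub_cancel_left, div_mul_eq_mul_div, mul_div_assoc, div_sqrt]; ring
  have hle := time_diff_le_of_abs_fx_le hpos hL (by linarith) hf hheat hfx hx
  have hge := time_diff_le_of_abs_fx_le hpos hL (by linarith) hf.neg
    (fun t ht x hx => (hheat t ht x hx).neg) (fun t ht x hx => by simpa using hfx t ht x hx) hx
  rw [hconst] at hle hge
  exact abs_le.2 ⟨by linarith, hle⟩

end HeatAt

-- Each halving of `h` costs a factor `2⁻¹` and a term `C h / 2`, which is absorbed since
-- `2 ^ α < 2`.
lemma abs_le_rpow_of_abs_doubling_le {q : ℝ → ℝ} {h₀ α C K M : ℝ} (hh₀ : h₀ ≤ 1) (hα₀ : 0 ≤ α)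
    (hα₁ : α < 1) (hC : 0 ≤ C) (hdouble : ∀ h ∈ Ioc 0 (h₀ / 2), |2 * q h - q (2 * h)| ≤ C * h)
    (hbdd : ∀ h ∈ Ioc 0 h₀, |q h| ≤ M) (hKM : M ≤ K * (h₀ / 2) ^ α)
    (hKC : C ≤ (2 - 2 ^ α) * K) : ∀ h ∈ Ioc 0 h₀, |q h| ≤ K * h ^ α := by
  have htwo : (2 : ℝ) ^ α < 2 := by
    simpa using rpow_lt_rpow_of_exponent_lt (by norm_num : (1 : ℝ) < 2) hα₁
  have hK : 0 ≤ K := nonneg_of_mul_nonneg_right (hC.trans hKC) (by linarith)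
  have hdyadic (n : ℕ) : ∀ h ∈ Ioc 0 h₀, h₀ ≤ 2 ^ (n + 1) * h → |q h| ≤ K * h ^ α := by
    induction n with
    | zero =>
      intro h hh hn
      refine (hbdd h hh).trans (hKM.trans ?_)
      have hh₀pos : 0 < h₀ := hh.1.trans_le hh.2
      gcongr
      norm_num at hn
      linarith
    | succ n ih =>
      intro h hh hn
      rcases le_or_gt (h₀ / 2) h with hlarge | hsmall
      · exact ih h hh (by
          have : (1 : ℝ) ≤ 2 ^ n := one_le_pow₀ (by norm_num)
          rw [pow_succ]; nlinarith [hh.1])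
      have htwice := ih (2 * h) ⟨by linarith [hh.1], by linarith⟩ (by rw [pow_succ] at hn; linarith)
      rw [mul_rpow (by norm_num) hh.1.le] at htwice
      have hle : C * h ≤ (2 - 2 ^ α) * K * h ^ α := by
        have hself : h ≤ h ^ α := by
          simpa using rpow_le_rpow_of_exponent_ge hh.1 (hh.2.trans hh₀) hα₁.le
        have hh' := hh.1.le
        gcongr
      have habs : 2 * |q h| ≤ |2 * q h - q (2 * h)| + |q (2 * h)| := by
        simpa [abs_mul] using abs_add_le (2 * q h - q (2 * h)) (q (2 * h))
      linarith [hdouble h ⟨hh.1, hsmall.le⟩]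
  intro h hh
  obtain ⟨n, hn⟩ := pow_unbounded_of_one_lt (h₀ / h) (by norm_num : (1 : ℝ) < 2)
  rw [div_lt_iff₀ hh.1] at hn
  exact hdyadic n h hh (hn.le.trans (by
    gcongr
    · exact hh.1.le
    · norm_num
    · simp))

lemma exists_abs_le_rpow_of_abs_doubling_le {h₀ α C M : ℝ} (hh₀ : h₀ ∈ Ioc 0 1) (hα₀ : 0 ≤ α)
    (hα₁ : α < 1) (hC : 0 < C) :
    ∃ K > 0, ∀ q : ℝ → ℝ, (∀ h ∈ Ioc 0 (h₀ / 2), |2 * q h - q (2 * h)| ≤ C * h) →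
      (∀ h ∈ Ioc 0 h₀, |q h| ≤ M) → ∀ h ∈ Ioc 0 h₀, |q h| ≤ K * h ^ α := by
  have htwo : 0 < 2 - (2 : ℝ) ^ α := by
    simpa using rpow_lt_rpow_of_exponent_lt (by norm_num : (1 : ℝ) < 2) hα₁
  have hpow : 0 < (h₀ / 2) ^ α := rpow_pos_of_pos (half_pos hh₀.1) α
  refine ⟨max (M / (h₀ / 2) ^ α) (C / (2 - 2 ^ α)), lt_max_of_lt_right (by positivity),
    fun q hdouble hbdd => abs_le_rpow_of_abs_doubling_le hh₀.2 hα₀ hα₁ hC.le hdouble hbdd ?_ ?_⟩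
  · exact (div_le_iff₀ hpow).1 (le_max_left _ _)
  · exact (div_le_iff₀' htwo).1 (le_max_right _ _)

/-! ### Regularity of solutions up to the boundary -/

lemma le_of_forall_mem_Ioo_le {g : ℝ → ℝ} {a b C x : ℝ} (hab : a < b)
    (hg : ContinuousOn g (Icc a b)) (hC : ∀ y ∈ Ioo a b, g y ≤ C) (hx : x ∈ Icc a b) :
    g x ≤ C := by
  rw [← closure_Ioo hab.ne] at hg hx
  exact le_on_closure hC hg continuousOn_const hx

lemma abs_rpow_sub_rpow_le {p L y z : ℝ} (hp : 1 ≤ p) (hy : y ∈ Icc 0 L) (hz : z ∈ Icc 0 L) :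
    |y ^ p - z ^ p| ≤ p * L ^ (p - 1) * |y - z| := by
  refine (convex_Icc 0 L).norm_image_sub_le_of_norm_hasDerivWithin_le (f := fun x => x ^ p)
    (fun x _ => (hasDerivAt_rpow_const (Or.inr hp)).hasDerivWithinAt) (fun x hx => ?_) hz hy
  have hpow : 0 ≤ x ^ (p - 1) := rpow_nonneg hx.1 _
  rw [norm_eq_abs, abs_of_nonneg (by positivity)]
  gcongr
  · exact hx.1
  · exact hx.2

namespace IsSolOn

variable {p s₀ T t : ℝ} {φ s : ℝ → ℝ} {u : ℝ → ℝ → ℝ}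

lemma heatAt (hS : IsSolOn p s₀ φ T s u) {x : ℝ} (ht : t ∈ Ioc 0 T) (hx : x ∈ Ioo 0 (s t)) :
    HeatAt u (fun t => deriv (u t)) (fun t => deriv (deriv (u t))) t x where
  eventually_hasDerivAt := by
    filter_upwards [Ioo_mem_nhds hx.1 hx.2] with y hy using (hS.ux_diff t ht y hy).hasDerivAt
  hasDerivAt_fx := (hS.uxx_diff t ht x hx).hasDerivAt
  hasDerivAt_time := hS.heat t ht x hx ▸ (hS.ut_diff t ht x hx).hasDerivAt

lemma continuousOn_u (hS : IsSolOn p s₀ φ T s u) (ht : t ∈ Icc 0 T) :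
    ContinuousOn (u t) (Icc 0 (s t)) :=
  hS.u_cont.comp (by fun_prop : ContinuousOn (fun x : ℝ => (t, x)) _) fun _ hx => ⟨ht, hx⟩

lemma continuousOn_ux (hS : IsSolOn p s₀ φ T s u) (ht : t ∈ Ioc 0 T) :
    ContinuousOn (deriv (u t)) (Icc 0 (s t)) :=
  hS.ux_cont.comp (by fun_prop : ContinuousOn (fun x : ℝ => (t, x)) _) fun _ hx => ⟨ht, hx⟩

lemma differentiableOn_u (hS : IsSolOn p s₀ φ T s u) (ht : t ∈ Ioc 0 T) :
    DifferentiableOn ℝ (u t) (Ioo 0 (s t)) :=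
  fun x hx => (hS.ux_diff t ht x hx).differentiableWithinAt

-- `deriv (u t) 0` is a two-sided derivative in the definition of a solution; only its
-- identification with the limit of `∂ₓu` from the interior makes it the derivative of `u t` on
-- `[0, s t]`.
lemma hasDerivWithinAt_zero (hS : IsSolOn p s₀ φ T s u) (ht : t ∈ Ioc 0 T) :
    HasDerivWithinAt (u t) (deriv (u t) 0) (Ici 0) 0 := by
  have hst := hS.s_pos t (Ioc_subset_Icc_self ht)
  have hlim := (hS.continuousOn_ux ht 0 ⟨le_rfl, hst.le⟩).mono Ioo_subset_Icc_self
  rw [ContinuousWithinAt, nhdsWithin_Ioo_eq_nhdsGT hst] at hlim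
  exact hasDerivWithinAt_Ici_of_tendsto_deriv (hS.differentiableOn_u ht)
    ((hS.continuousOn_u (Ioc_subset_Icc_self ht) 0 ⟨le_rfl, hst.le⟩).mono Ioo_subset_Icc_self)
    (Ioo_mem_nhdsGT hst) hlim

lemma hasDerivWithinAt_free (hS : IsSolOn p s₀ φ T s u) (ht : t ∈ Ioc 0 T) :
    HasDerivWithinAt (u t) (deriv (u t) (s t)) (Iic (s t)) (s t) := by
  have hst := hS.s_pos t (Ioc_subset_Icc_self ht)
  have hlim := (hS.continuousOn_ux ht (s t) ⟨hst.le, le_rfl⟩).mono Ioo_subset_Icc_self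
  rw [ContinuousWithinAt, nhdsWithin_Ioo_eq_nhdsLT hst] at hlim
  exact hasDerivWithinAt_Iic_of_tendsto_deriv (hS.differentiableOn_u ht)
    ((hS.continuousOn_u (Ioc_subset_Icc_self ht) (s t) ⟨hst.le, le_rfl⟩).mono Ioo_subset_Icc_self)
    (Ioo_mem_nhdsLT hst) hlim

lemma hasDerivWithinAt_Icc (hS : IsSolOn p s₀ φ T s u) {x : ℝ} (ht : t ∈ Ioc 0 T)
    (hx : x ∈ Icc 0 (s t)) : HasDerivWithinAt (u t) (deriv (u t) x) (Icc 0 (s t)) x := by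
  rcases hx.1.eq_or_lt with rfl | h0
  · exact (hS.hasDerivWithinAt_zero ht).mono Icc_subset_Ici_self
  rcases hx.2.eq_or_lt with rfl | hs
  · exact (hS.hasDerivWithinAt_free ht).mono Icc_subset_Iic_self
  · exact (hS.ux_diff t ht x ⟨h0, hs⟩).hasDerivAt.hasDerivWithinAt

lemma deriv_s_nonneg (hS : IsSolOn p s₀ φ T s u) (ht : t ∈ Ioc 0 T) : 0 ≤ deriv s t := by
  have hst := hS.s_pos t (Ioc_subset_Icc_self ht)
  rw [hS.stefan t ht]
  refine nonneg_of_isLocalMaxOn_Iic (g := fun x => -u t x) ?_ (hS.hasDerivWithinAt_free ht).neg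
  filter_upwards [Icc_mem_nhdsLE hst] with y hy
  rw [hS.bc_free t ht]
  linarith [hS.u_nonneg t (Ioc_subset_Icc_self ht) y hy]

lemma monotoneOn_s (hS : IsSolOn p s₀ φ T s u) : MonotoneOn s (Icc 0 T) := by
  refine monotoneOn_of_deriv_nonneg (convex_Icc 0 T) hS.s_cont ?_ ?_ <;> rw [interior_Icc]
  · exact fun t ht => (hS.s_diff t ⟨ht.1, ht.2.le⟩).differentiableWithinAt
  · exact fun t ht => hS.deriv_s_nonneg ⟨ht.1, ht.2.le⟩

lemma continuousOn_time_diff (hS : IsSolOn p s₀ φ T s u) {a b h l : ℝ} (ha : 0 ≤ a)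
    (hb : b + h ≤ T) (hh : 0 ≤ h) (hl : 0 ≤ l) :
    ContinuousOn (fun q : ℝ × ℝ => u (q.1 + h) q.2 - u q.1 q.2) (slab a b l s) := by
  have hmem {q : ℝ × ℝ} (hq : q ∈ slab a b l s) :
      q.1 ∈ Icc 0 T ∧ q.1 + h ∈ Icc 0 T ∧ s q.1 ≤ s (q.1 + h) := by
    have h₁ : q.1 ∈ Icc 0 T := ⟨ha.trans hq.1.1, by linarith [hq.1.2]⟩
    have h₂ : q.1 + h ∈ Icc 0 T := ⟨by linarith [h₁.1], by linarith [hq.1.2]⟩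
    exact ⟨h₁, h₂, hS.monotoneOn_s h₁ h₂ (by linarith)⟩
  refine ContinuousOn.sub ?_ (hS.u_cont.mono fun q hq => ⟨(hmem hq).1, hl.trans hq.2.1, hq.2.2⟩)
  exact hS.u_cont.comp (by fun_prop : ContinuousOn (fun q : ℝ × ℝ => (q.1 + h, q.2)) _)
    fun q hq => ⟨(hmem hq).2.1, hl.trans hq.2.1, hq.2.2.trans (hmem hq).2.2⟩

lemma heatAt_time_diff (hS : IsSolOn p s₀ φ T s u) {h x : ℝ} (ht : t ∈ Ioc 0 T) (hh : 0 ≤ h)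
    (hth : t + h ≤ T) (hx : x ∈ Ioo 0 (s t)) :
    HeatAt (fun t x => u (t + h) x - u t x) (fun t x => deriv (u (t + h)) x - deriv (u t) x)
      (fun t x => deriv (deriv (u (t + h))) x - deriv (deriv (u t)) x) t x := by
  have hth' : t + h ∈ Ioc 0 T := ⟨by linarith [ht.1], hth⟩
  have hs : s t ≤ s (t + h) := hS.monotoneOn_s (Ioc_subset_Icc_self ht)
    (Ioc_subset_Icc_self hth') (by linarith)
  exact (hS.heatAt ht hx).time_diff (hS.heatAt hth' ⟨hx.1, hx.2.trans_le hs⟩)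

lemma continuousOn_u_prod (hS : IsSolOn p s₀ φ T s u) {a b x₁ x₂ : ℝ} (ha : 0 ≤ a) (hb : b ≤ T)
    (hx₁ : 0 ≤ x₁) (hx₂ : x₂ ≤ s a) :
    ContinuousOn (fun q : ℝ × ℝ => u q.1 q.2) (Icc a b ×ˢ Icc x₁ x₂) := by
  refine hS.u_cont.mono fun q hq => ?_
  have hq₁ : q.1 ∈ Icc 0 T := ⟨ha.trans hq.1.1, hq.1.2.trans hb⟩
  exact ⟨hq₁, hx₁.trans hq.2.1, hq.2.2.trans (hx₂.trans
    (hS.monotoneOn_s ⟨ha, hq.1.1.trans hq₁.2⟩ hq₁ hq.1.1))⟩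

lemma heatAt_of_mem_Ioo (hS : IsSolOn p s₀ φ T s u) {a x : ℝ} (ha : 0 < a) (ht : t ∈ Icc a T)
    (hx : x ∈ Ioo 0 (s a)) :
    HeatAt u (fun t => deriv (u t)) (fun t => deriv (deriv (u t))) t x :=
  hS.heatAt ⟨ha.trans_le ht.1, ht.2⟩ ⟨hx.1, hx.2.trans_le
    (hS.monotoneOn_s ⟨ha.le, ht.1.trans ht.2⟩ ⟨ha.le.trans ht.1, ht.2⟩ ht.1)⟩

end IsSolOn

/-- Quantitative control of a solution on the time interval `[δ, T]`, away from the initial time: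
the single constant `L` bounds `|u|` and `|∂ₓu|` up to both boundaries, and it is a
`1/2`-Hölder constant of `u` in time. -/
structure HasParabolicBound (s : ℝ → ℝ) (u : ℝ → ℝ → ℝ) (δ T L : ℝ) : Prop where
  δ_pos : 0 < δ
  δ_le : δ ≤ T
  L_pos : 0 < L
  abs_u_le : ∀ t ∈ Icc δ T, ∀ x ∈ Icc 0 (s t), |u t x| ≤ L
  abs_ux_le : ∀ t ∈ Icc δ T, ∀ x ∈ Icc 0 (s t), |deriv (u t) x| ≤ L
  abs_time_diff_le : ∀ t ∈ Icc δ T, ∀ h > 0, t + h ≤ T → ∀ x ∈ Icc 0 (s t),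
    |u (t + h) x - u t x| ≤ L * √h

namespace IsSolOn

variable {p s₀ T δ L : ℝ} {φ s : ℝ → ℝ} {u : ℝ → ℝ → ℝ}

lemma exists_abs_le (hS : IsSolOn p s₀ φ T s u) (hδ : 0 < δ) :
    ∃ L > 0, ∀ t ∈ Icc δ T, ∀ x ∈ Icc 0 (s t), |u t x| ≤ L ∧ |deriv (u t) x| ≤ L := by
  have hslab : IsCompact (slab δ T 0 s) :=
    isCompact_slab (hS.s_cont.mono (Icc_subset_Icc_left hδ.le))
  obtain ⟨L₁, hL₁⟩ := hslab.exists_bound_of_continuousOn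
    (hS.u_cont.mono fun q hq => ⟨⟨hδ.le.trans hq.1.1, hq.1.2⟩, hq.2⟩)
  obtain ⟨L₂, hL₂⟩ := hslab.exists_bound_of_continuousOn
    (hS.ux_cont.mono fun q hq => ⟨⟨hδ.trans_le hq.1.1, hq.1.2⟩, hq.2⟩)
  refine ⟨max 1 (max L₁ L₂), by positivity, fun t ht x hx => ⟨?_, ?_⟩⟩
  · exact (hL₁ (t, x) ⟨ht, hx⟩).trans (by simp)
  · exact (hL₂ (t, x) ⟨ht, hx⟩).trans (by simp)

-- The interval of length `√h` around `x` on which the interior estimate is applied is the image of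
-- `[0, s t]` under the contraction that fixes `x`, hence stays inside `(0, s t)`.
lemma abs_time_diff_le_of_sqrt_lt (hS : IsSolOn p s₀ φ T s u) (hL : 0 < L)
    (hux : ∀ t ∈ Icc δ T, ∀ x ∈ Icc 0 (s t), |deriv (u t) x| ≤ L) (hδ : 0 < δ) {t h x : ℝ}
    (ht : δ ≤ t) (hh : 0 < h) (hth : t + h ≤ T) (hhs : √h < s t) (hx : x ∈ Ioo 0 (s t)) :
    |u (t + h) x - u t x| ≤ 7 * L * √h := by
  have hst : 0 < s t := hx.1.trans hx.2
  obtain ⟨θ, hθ, rfl⟩ : ∃ θ ∈ Ioo (0 : ℝ) 1, x = θ * s t :=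
    ⟨x / s t, ⟨div_pos hx.1 hst, (div_lt_one hst).2 hx.2⟩, by field_simp⟩
  have hsqrt : 0 ≤ √h := sqrt_nonneg h
  set x₁ := θ * (s t - √h)
  have hx₁pos : 0 < x₁ := mul_pos hθ.1 (by linarith)
  have hx₁lt : x₁ + √h < s t := by nlinarith [hθ.2]
  have hmem {z : ℝ} (hz : z ∈ Icc x₁ (x₁ + √h)) : z ∈ Ioo 0 (s t) :=
    ⟨by linarith [hz.1], by linarith [hz.2]⟩
  have hmono {τ : ℝ} (hτ : τ ∈ Icc t (t + h)) : s t ≤ s τ :=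
    hS.monotoneOn_s ⟨by linarith, by linarith⟩ ⟨by linarith [hτ.1], by linarith [hτ.2]⟩ hτ.1
  exact HeatAt.abs_time_diff_le_of_abs_fx_le hL hh
    (hS.continuousOn_u_prod (by linarith) hth hx₁pos.le hx₁lt.le)
    (fun τ hτ z hz => hS.heatAt_of_mem_Ioo (by linarith) ⟨hτ.1, hτ.2.trans hth⟩ (hmem hz))
    (fun τ hτ z hz => hux τ ⟨ht.trans hτ.1, hτ.2.trans hth⟩ z
      ⟨(hmem hz).1.le, (hmem hz).2.le.trans (hmono hτ)⟩)
    ⟨by nlinarith [hθ.1], by nlinarith [hθ.2]⟩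

lemma exists_hasParabolicBound (hS : IsSolOn p s₀ φ T s u) (hδ : 0 < δ) (hδT : δ ≤ T) :
    ∃ L, HasParabolicBound s u δ T L := by
  obtain ⟨L, hL, hbound⟩ := hS.exists_abs_le hδ
  have hsδ : 0 < s δ := hS.s_pos δ ⟨hδ.le, hδT⟩
  have hle : L ≤ 7 * L + 2 * L / s δ := by
    have : 0 ≤ 2 * L / s δ := by positivity
    linarith
  refine ⟨7 * L + 2 * L / s δ, hδ, hδT, by positivity,
    fun t ht x hx => (hbound t ht x hx).1.trans hle,
    fun t ht x hx => (hbound t ht x hx).2.trans hle, fun t ht h hh hth x hx => ?_⟩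
  have htT : t ∈ Icc 0 T := ⟨hδ.le.trans ht.1, ht.2⟩
  have hthT : t + h ∈ Icc 0 T := ⟨by linarith [htT.1], hth⟩
  have hδs : s δ ≤ s t := hS.monotoneOn_s ⟨hδ.le, hδT⟩ htT ht.1
  have hss : s t ≤ s (t + h) := hS.monotoneOn_s htT hthT (by linarith)
  rcases lt_or_ge (√h) (s δ) with hsmall | hlarge
  · refine le_of_forall_mem_Ioo_le (g := fun x => |u (t + h) x - u t x|) (hsδ.trans_le hδs)
      (((hS.continuousOn_u hthT).mono (Icc_subset_Icc_right hss)).sub (hS.continuousOn_u htT)).abs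
      (fun y hy => ?_) hx
    refine (hS.abs_time_diff_le_of_sqrt_lt hL (fun t ht x hx => (hbound t ht x hx).2) hδ ht.1 hh hth
      (hsmall.trans_le hδs) hy).trans ?_
    gcongr
    linarith [show 0 ≤ 2 * L / s δ by positivity]
  · calc |u (t + h) x - u t x| ≤ |u (t + h) x| + |u t x| := abs_sub _ _
      _ ≤ L + L := add_le_add
          (hbound _ ⟨by linarith [ht.1], hth⟩ x ⟨hx.1, hx.2.trans hss⟩).1 (hbound t ht x hx).1
      _ = 2 * L / s δ * s δ := by field_simp; ring
      _ ≤ (7 * L + 2 * L / s δ) * √h := by gcongr; linarith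

end IsSolOn

namespace HasParabolicBound

variable {p s₀ T δ L t h x : ℝ} {φ s : ℝ → ℝ} {u : ℝ → ℝ → ℝ}

lemma mem_Ioc (hB : HasParabolicBound s u δ T L) (ht : t ∈ Icc δ T) : t ∈ Ioc 0 T :=
  ⟨hB.δ_pos.trans_le ht.1, ht.2⟩

lemma mem_Icc (hB : HasParabolicBound s u δ T L) (ht : t ∈ Icc δ T) : t ∈ Icc 0 T :=
  Ioc_subset_Icc_self (hB.mem_Ioc ht)

lemma s_le_s (hB : HasParabolicBound s u δ T L) (hS : IsSolOn p s₀ φ T s u) {a b : ℝ}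
    (ha : δ ≤ a) (hab : a ≤ b) (hb : b ≤ T) : s a ≤ s b :=
  hS.monotoneOn_s (hB.mem_Icc ⟨ha, hab.trans hb⟩) (hB.mem_Icc ⟨ha.trans hab, hb⟩) hab

lemma s_sub_le (hB : HasParabolicBound s u δ T L) (hS : IsSolOn p s₀ φ T s u) {a b : ℝ}
    (ha : δ ≤ a) (hab : a ≤ b) (hb : b ≤ T) : s b - s a ≤ L * (b - a) := by
  have hs : ∀ t ∈ Icc δ T, HasDerivWithinAt s (deriv s t) (Icc δ T) t := fun t ht =>
    (hS.s_diff t (hB.mem_Ioc ht)).hasDerivAt.hasDerivWithinAt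
  have hs' : ∀ t ∈ Icc δ T, ‖deriv s t‖ ≤ L := fun t ht => by
    rw [hS.stefan t (hB.mem_Ioc ht), norm_neg]
    exact hB.abs_ux_le t ht (s t) ⟨(hS.s_pos t (hB.mem_Icc ht)).le, le_rfl⟩
  have hle := (convex_Icc δ T).norm_image_sub_le_of_norm_hasDerivWithin_le hs hs'
    ⟨ha, hab.trans hb⟩ ⟨ha.trans hab, hb⟩
  rw [norm_eq_abs, norm_eq_abs, abs_of_nonneg (sub_nonneg.2 hab)] at hle
  exact (le_abs_self _).trans hle

lemma abs_u_sub_le (hB : HasParabolicBound s u δ T L) (hS : IsSolOn p s₀ φ T s u) {y : ℝ}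
    (ht : t ∈ Icc δ T) (hx : x ∈ Icc 0 (s t)) (hy : y ∈ Icc 0 (s t)) :
    |u t y - u t x| ≤ L * |y - x| :=
  (convex_Icc 0 (s t)).norm_image_sub_le_of_norm_hasDerivWithin_le
    (fun _ hz => hS.hasDerivWithinAt_Icc (hB.mem_Ioc ht) hz) (hB.abs_ux_le t ht) hx hy

lemma abs_time_diff_free_le (hB : HasParabolicBound s u δ T L) (hS : IsSolOn p s₀ φ T s u)
    (ht : δ ≤ t) (hh : 0 ≤ h) (hth : t + h ≤ T) :
    |u (t + h) (s t) - u t (s t)| ≤ L ^ 2 * h := by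
  have htI : t ∈ Icc δ T := ⟨ht, by linarith⟩
  have hthI : t + h ∈ Icc δ T := ⟨by linarith, hth⟩
  have hss : s t ≤ s (t + h) := hB.s_le_s hS ht (by linarith) hth
  have hst := hS.s_pos t (hB.mem_Icc htI)
  have hslip := hB.s_sub_le hS ht (by linarith : t ≤ t + h) hth
  calc |u (t + h) (s t) - u t (s t)| = |u (t + h) (s t) - u (t + h) (s (t + h))| := by
        rw [hS.bc_free t (hB.mem_Ioc htI), hS.bc_free (t + h) (hB.mem_Ioc hthI)]
    _ ≤ L * |s t - s (t + h)| := hB.abs_u_sub_le hS hthI ⟨hst.le.trans hss, le_rfl⟩ ⟨hst.le, hss⟩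
    _ = L * (s (t + h) - s t) := by rw [abs_sub_comm, abs_of_nonneg (sub_nonneg.2 hss)]
    _ ≤ L * (L * (t + h - t)) := mul_le_mul_of_nonneg_left hslip hB.L_pos.le
    _ = L ^ 2 * h := by ring

lemma abs_time_diff_le_near_free (hB : HasParabolicBound s u δ T L) (hS : IsSolOn p s₀ φ T s u)
    {ρ : ℝ} (hρ : 0 < ρ) (hρs : ρ ≤ s t) (hρt : δ + ρ ^ 2 ≤ t) (hh : 0 < h) (hth : t + h ≤ T)
    (hx : x ∈ Icc (s t - ρ) (s t)) :
    |u (t + h) x - u t x| ≤ L ^ 2 * h + 2 * (L * √h) / ρ * (s t - x) := by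
  have hpos := hB.δ_pos
  have hL := hB.L_pos
  have hτ {τ : ℝ} (hτ : τ ∈ Icc (t - ρ ^ 2) t) : δ ≤ τ ∧ τ + h ≤ T :=
    ⟨by linarith [hτ.1], by linarith [hτ.2]⟩
  refine HeatAt.abs_le_add_dist_of_abs_le_boundary (f := fun t x => u (t + h) x - u t x) (s := s)
    hρ (by positivity) (by positivity)
    (hS.s_cont.mono (Icc_subset_Icc (by linarith) (by linarith)))
    (fun τ h' => hB.s_le_s hS (hτ h').1 h'.2 (by linarith))
    (hS.continuousOn_time_diff (by linarith) hth hh.le (by linarith))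
    (fun τ h' y hy => hS.heatAt_time_diff ⟨by linarith [(hτ h').1], by linarith [(hτ h').2]⟩ hh.le
      (hτ h').2 ⟨by linarith [hy.1], hy.2⟩)
    (fun q hq => hB.abs_time_diff_le q.1 ⟨(hτ hq.1).1, by linarith [(hτ hq.1).2]⟩ h hh (hτ hq.1).2
      q.2 ⟨by linarith [hq.2.1], hq.2.2⟩)
    (fun τ h' => hB.abs_time_diff_free_le hS (hτ h').1 hh.le (hτ h').2) hx

lemma abs_ux_time_diff_zero_le (hB : HasParabolicBound s u δ T L) (hS : IsSolOn p s₀ φ T s u)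
    (hp : 1 ≤ p) (ht : δ ≤ t) (hh : 0 < h) (hth : t + h ≤ T) :
    |deriv (u (t + h)) 0 - deriv (u t) 0| ≤ p * L ^ (p - 1) * (L * √h) := by
  have hpow := rpow_nonneg hB.L_pos.le (p - 1)
  have htI : t ∈ Icc δ T := ⟨ht, by linarith⟩
  have hthI : t + h ∈ Icc δ T := ⟨by linarith, hth⟩
  have hzero {τ : ℝ} (hτ : τ ∈ Icc δ T) : (0 : ℝ) ∈ Icc 0 (s τ) :=
    ⟨le_rfl, (hS.s_pos τ (hB.mem_Icc hτ)).le⟩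
  have hmem {τ : ℝ} (hτ : τ ∈ Icc δ T) : u τ 0 ∈ Icc 0 L :=
    ⟨hS.u_nonneg τ (hB.mem_Icc hτ) 0 (hzero hτ),
      (le_abs_self _).trans (hB.abs_u_le τ hτ 0 (hzero hτ))⟩
  calc |deriv (u (t + h)) 0 - deriv (u t) 0| = |u (t + h) 0 ^ p - u t 0 ^ p| := by
        rw [← hS.bc_zero t (hB.mem_Ioc htI), ← hS.bc_zero (t + h) (hB.mem_Ioc hthI), ← abs_neg]
        ring_nf
    _ ≤ p * L ^ (p - 1) * |u (t + h) 0 - u t 0| := abs_rpow_sub_rpow_le hp (hmem hthI) (hmem htI)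
    _ ≤ p * L ^ (p - 1) * (L * √h) := by
        gcongr
        exact hB.abs_time_diff_le t htI h hh hth 0 (hzero htI)

lemma abs_ux_time_diff_le (hB : HasParabolicBound s u δ T L) (hS : IsSolOn p s₀ φ T s u)
    (hp : 1 ≤ p) {r : ℝ} (hrs : 2 * r ≤ s δ) (hrt : δ + r ^ 2 ≤ t) (hh : 0 < h) (hth : t + h ≤ T)
    (hx : x ∈ Ioo 0 r) :
    |deriv (u (t + h)) x - deriv (u t) x| ≤ (2 * L / r + p * L ^ (p - 1) * L) * √h := by
  have hpos := hB.δ_pos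
  have hL := hB.L_pos
  have hτ {τ : ℝ} (hτ : τ ∈ Icc (t - r ^ 2) t) : δ ≤ τ ∧ τ + h ≤ T ∧ x + r < s τ := by
    have hδτ : δ ≤ τ := by linarith [hτ.1]
    exact ⟨hδτ, by linarith [hτ.2],
      by linarith [hx.2, hB.s_le_s hS le_rfl hδτ (by linarith [hτ.2])]⟩
  have hdiff := HeatAt.abs_fx_le_of_neumann (f := fun t x => u (t + h) x - u t x)
    (fx := fun t x => deriv (u (t + h)) x - deriv (u t) x) (t₀ := t) (M := L * √h)
    (m := p * L ^ (p - 1) * (L * √h)) (by positivity) (by positivity) hx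
    ((hS.continuousOn_time_diff (by linarith) hth hh.le le_rfl).mono fun q hq =>
      ⟨hq.1, hq.2.1, hq.2.2.trans (hτ hq.1).2.2.le⟩)
    (fun τ h' y hy => hS.heatAt_time_diff ⟨by linarith [(hτ h').1], by linarith [(hτ h').2.1]⟩ hh.le
      (hτ h').2.1 ⟨hy.1, hy.2.trans (hτ h').2.2⟩)
    (fun τ h' y hy => hB.abs_time_diff_le τ ⟨(hτ h').1, by linarith [(hτ h').2.1]⟩ h hh (hτ h').2.1
      y ⟨hy.1, hy.2.trans (hτ h').2.2.le⟩)
    (fun τ h' => (hS.hasDerivWithinAt_zero ⟨by linarith [(hτ h').1], (hτ h').2.1⟩).fun_sub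
      (hS.hasDerivWithinAt_zero ⟨by linarith [(hτ h').1], by linarith [(hτ h').2.1]⟩))
    (fun τ h' => hB.abs_ux_time_diff_zero_le hS hp (hτ h').1 hh (hτ h').2.1)
  exact hdiff.trans_eq (by ring)

lemma abs_second_time_diff_le (hB : HasParabolicBound s u δ T L) (hS : IsSolOn p s₀ φ T s u)
    (hp : 1 ≤ p) {r : ℝ} (hrs : 2 * r ≤ s δ) (hrt : δ + r ^ 2 ≤ t) (hh : 0 < h)
    (hhr : √h ≤ r / 2) (hth : t + h + h ≤ T) (hx : x ∈ Ioo 0 (r / 2)) :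
    |(u (t + h + h) x - u (t + h) x) - (u (t + h) x - u t x)| ≤
      7 * (2 * L / r + p * L ^ (p - 1) * L) * h := by
  have hpos := hB.δ_pos
  have hL := hB.L_pos
  have hr : 0 < r := by linarith [hx.1, hx.2]
  have hsqrt := sqrt_pos.2 hh
  have hmem {y : ℝ} (hy : y ∈ Icc x (x + √h)) : y ∈ Ioo 0 r :=
    ⟨hx.1.trans_le hy.1, by linarith [hy.2, hx.2]⟩
  have hδt : δ ≤ t := by linarith [sq_nonneg r]
  have hs {τ : ℝ} (hτ : τ ∈ Icc t (t + h)) : r < s τ := by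
    linarith [hB.s_le_s hS le_rfl (hδt.trans hτ.1) (by linarith [hτ.2])]
  have hdiff := HeatAt.abs_time_diff_le_of_abs_fx_le (f := fun t x => u (t + h) x - u t x)
    (fx := fun t x => deriv (u (t + h)) x - deriv (u t) x) (t := t) (x₁ := x) (x := x)
    (L := (2 * L / r + p * L ^ (p - 1) * L) * √h) (by positivity) hh
    ((hS.continuousOn_time_diff (by linarith) hth hh.le le_rfl).mono fun q hq =>
      ⟨hq.1, (hmem hq.2).1.le, ((hmem hq.2).2.trans (hs hq.1)).le⟩)
    (fun τ hτ y hy => hS.heatAt_time_diff ⟨by linarith [hτ.1], by linarith [hτ.2]⟩ hh.le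
      (by linarith [hτ.2]) ⟨(hmem hy).1, (hmem hy).2.trans (hs hτ)⟩)
    (fun τ hτ y hy => hB.abs_ux_time_diff_le hS hp hrs (by linarith [hτ.1]) hh (by linarith [hτ.2])
      (hmem hy)) ⟨le_rfl, by linarith⟩
  refine hdiff.trans_eq ?_
  linear_combination 7 * (2 * L / r + p * L ^ (p - 1) * L) * mul_self_sqrt hh.le

lemma exists_radius (hB : HasParabolicBound s u δ T L) (hS : IsSolOn p s₀ φ T s u) :
    ∃ r > 0, 2 * r ≤ s δ ∧ r ^ 2 ≤ δ := by
  have hδ := hB.δ_pos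
  have hsδ := hS.s_pos δ (hB.mem_Icc ⟨le_rfl, hB.δ_le⟩)
  refine ⟨min (√δ) (s δ / 2), by positivity, by linarith [min_le_right (√δ) (s δ / 2)], ?_⟩
  exact (pow_le_pow_left₀ (by positivity) (min_le_left _ _) 2).trans_eq (sq_sqrt hδ.le)

lemma abs_doubling_time_diff_le (hB : HasParabolicBound s u δ T L) (hS : IsSolOn p s₀ φ T s u)
    (hp : 1 ≤ p) {r b : ℝ} (hrs : 2 * r ≤ s δ) (hb : δ + r ^ 2 ≤ b - 2 * h) (hbT : b ≤ T)
    (hh : 0 < h) (hhr : √h ≤ r / 2) (hx : x ∈ Ioo 0 (r / 2)) :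
    |2 * (u b x - u (b - h) x) - (u b x - u (b - 2 * h) x)| ≤
      7 * (2 * L / r + p * L ^ (p - 1) * L) * h := by
  have hdiff := hB.abs_second_time_diff_le hS hp hrs hb hh hhr (by linarith) hx
  rw [show b - 2 * h + h + h = b by ring, show b - 2 * h + h = b - h by ring] at hdiff
  exact (congrArg abs (by ring)).trans_le hdiff

lemma exists_abs_time_diff_le_rpow (hB : HasParabolicBound s u δ T L)
    (hS : IsSolOn p s₀ φ T s u) (hp : 1 ≤ p) {α : ℝ} (hα₀ : 0 ≤ α) (hα₁ : α < 1) :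
    ∃ K > 0, ∃ h₀ ∈ Ioc 0 δ, ∃ R ∈ Ioo 0 (s δ), ∀ b ∈ Icc (3 * δ) T, ∀ h ∈ Ioc 0 h₀,
      ∀ x ∈ Icc 0 R, |u b x - u (b - h) x| ≤ K * h ^ α := by
  obtain ⟨r, hr, hrs, hrδ⟩ := hB.exists_radius hS
  have hL := hB.L_pos
  have hδ := hB.δ_pos
  set h₀ := min (min δ 1) ((r / 2) ^ 2)
  have hh₀_pos : 0 < h₀ := by positivity
  have hh₀_δ : h₀ ≤ δ := (min_le_left _ _).trans (min_le_left _ _)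
  have hh₀_one : h₀ ≤ 1 := (min_le_left _ _).trans (min_le_right _ _)
  obtain ⟨K, hK, hrpow⟩ := exists_abs_le_rpow_of_abs_doubling_le (M := L + L)
    (C := 7 * (2 * L / r + p * L ^ (p - 1) * L)) ⟨hh₀_pos, hh₀_one⟩ hα₀ hα₁ (by positivity)
  refine ⟨K, hK, h₀, ⟨hh₀_pos, hh₀_δ⟩, r / 2, ⟨by positivity, by linarith⟩,
    fun b hb h hh x hx => ?_⟩
  have hbI {k : ℝ} (hk : k ∈ Icc 0 h₀) : b - k ∈ Icc δ T :=
    ⟨by linarith [hb.1, hk.2], by linarith [hb.2, hk.1]⟩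
  have hbδ : b ∈ Icc δ T := ⟨by linarith [hb.1], hb.2⟩
  have hs {t : ℝ} (ht : t ∈ Icc δ T) : r / 2 ≤ s t := by
    linarith [hB.s_le_s hS le_rfl ht.1 ht.2]
  refine le_of_forall_mem_Ioo_le (g := fun x => |u b x - u (b - h) x|) (half_pos hr)
    (((hS.continuousOn_u (hB.mem_Icc hbδ)).mono (Icc_subset_Icc_right (hs hbδ))).sub
      ((hS.continuousOn_u (hB.mem_Icc (hbI ⟨hh.1.le, hh.2⟩))).mono
        (Icc_subset_Icc_right (hs (hbI ⟨hh.1.le, hh.2⟩))))).abs (fun y hy => ?_) hx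
  refine hrpow (fun h => u b y - u (b - h) y) (fun k hk => ?_) (fun k hk => ?_) h hh
  · have hkr : √k ≤ r / 2 := (sqrt_le_left (by positivity)).2
      (by linarith [hk.2, min_le_right (min δ 1) ((r / 2) ^ 2)])
    exact hB.abs_doubling_time_diff_le hS hp hrs (by linarith [hb.1, hk.2]) hb.2 hk.1 hkr hy
  · have hkI := hbI ⟨hk.1.le, hk.2⟩
    exact (abs_sub _ _).trans (add_le_add (hB.abs_u_le b hbδ y ⟨hy.1.le, hy.2.le.trans (hs hbδ)⟩)
      (hB.abs_u_le _ hkI y ⟨hy.1.le, hy.2.le.trans (hs hkI)⟩))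

lemma abs_uxx_le_rpow_near_zero (hB : HasParabolicBound s u δ T L) (hS : IsSolOn p s₀ φ T s u)
    {α K h₀ R : ℝ} (hα₀ : 0 ≤ α) (hK : 0 < K) (hh₀ : h₀ ∈ Ioc 0 δ) (hR : R ∈ Ioo 0 (s δ))
    (hosc : ∀ b ∈ Icc (3 * δ) T, ∀ h ∈ Ioc 0 h₀, ∀ x ∈ Icc 0 R,
      |u b x - u (b - h) x| ≤ K * h ^ α)
    (ht : t ∈ Icc (4 * δ) T) (hx : 0 < x) (hxR : 2 * x ≤ R) (hxh₀ : x ^ 2 ≤ h₀) :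
    |deriv (deriv (u t)) x| ≤ 148 * K * x ^ (2 * α - 2) := by
  have hδ := hB.δ_pos
  have hh₀δ := hh₀.2
  have hx2 : 0 < x ^ 2 := by positivity
  have hs : s δ ≤ s (t - 2 * (x / 2) ^ 2) :=
    hB.s_le_s hS le_rfl (by linarith [ht.1]) (by linarith [ht.2])
  have huxx := HeatAt.abs_fxx_le_of_time_osc_le (f := u) (fx := fun t => deriv (u t))
    (fxx := fun t => deriv (deriv (u t))) (t₀ := t) (x₀ := x) (r := x / 2)
    (M := K * (x ^ 2) ^ α) (by positivity) (by positivity)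
    (hS.continuousOn_u_prod (by linarith [ht.1]) ht.2 (by linarith) (by linarith [hR.2]))
    (fun τ hτ y hy => hS.heatAt_of_mem_Ioo (by linarith [ht.1]) ⟨hτ.1, hτ.2.trans ht.2⟩
      ⟨by linarith [hy.1], by linarith [hy.2, hR.2]⟩) fun t₁ ht₁ t₂ ht₂ hlt y hy => ?_
  · refine huxx.trans_eq ?_
    rw [rpow_sub hx, rpow_mul hx.le, rpow_two]
    field_simp
    ring
  · have hle : t₂ - t₁ ≤ x ^ 2 := by linarith [ht₁.1, ht₂.2]
    have hdiff := hosc t₂ ⟨by linarith [ht₂.1, ht.1], ht₂.2.trans ht.2⟩ (t₂ - t₁)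
      ⟨by linarith, by linarith⟩ y ⟨by linarith [hy.1], by linarith [hy.2]⟩
    rw [sub_sub_cancel] at hdiff
    refine hdiff.trans ?_
    gcongr

lemma abs_time_diff_le_mul_sq_near_free (hB : HasParabolicBound s u δ T L)
    (hS : IsSolOn p s₀ φ T s u) {ρ r t₁ t₂ : ℝ} (hρ : 0 < ρ) (hρs : ρ ≤ s t₁)
    (hρt : δ + ρ ^ 2 ≤ t₁) (hr : 0 < r) (hrρ : 5 * r ≤ ρ) (hlt : t₁ < t₂)
    (hle : t₂ - t₁ ≤ 2 * r ^ 2) (hT : t₂ ≤ T) (hx : x ∈ Icc (s t₁ - 5 * r) (s t₁)) :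
    |u t₂ x - u t₁ x| ≤ (2 * L ^ 2 + 20 * L / ρ) * r ^ 2 := by
  have hL := hB.L_pos
  have hdiff := hB.abs_time_diff_le_near_free hS (t := t₁) (h := t₂ - t₁) (x := x) hρ hρs hρt
    (sub_pos.2 hlt) (by linarith) ⟨by linarith [hx.1], hx.2⟩
  rw [add_sub_cancel] at hdiff
  have hsqrt : √(t₂ - t₁) ≤ 2 * r := (sqrt_le_left (by linarith)).2 (by nlinarith)
  have hdist : 0 ≤ s t₁ - x := sub_nonneg.2 hx.2
  calc |u t₂ x - u t₁ x| ≤ L ^ 2 * (t₂ - t₁) + 2 * (L * √(t₂ - t₁)) / ρ * (s t₁ - x) := hdiff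
    _ ≤ L ^ 2 * (2 * r ^ 2) + 2 * (L * (2 * r)) / ρ * (5 * r) := by gcongr; linarith [hx.1]
    _ = (2 * L ^ 2 + 20 * L / ρ) * r ^ 2 := by ring

lemma abs_uxx_le_near_free (hB : HasParabolicBound s u δ T L) (hS : IsSolOn p s₀ φ T s u)
    {ρ r : ℝ} (hρs : ρ ≤ s δ) (hρδ : ρ ^ 2 ≤ δ) (ht : t ∈ Icc (4 * δ) T) (hr : 0 < r)
    (hrL : 4 * r * L ≤ 1) (hrρ : 8 * r ≤ ρ) :
    |deriv (deriv (u t)) (s t - 4 * r)| ≤ 37 * (2 * L ^ 2 + 20 * L / ρ) := by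
  have hδ := hB.δ_pos
  have hL := hB.L_pos
  have hρ : 0 < ρ := by linarith
  have hr2 : 2 * r ^ 2 ≤ δ := by nlinarith
  have hs {τ : ℝ} (hτ : τ ∈ Icc (t - 2 * r ^ 2) t) : ρ ≤ s τ ∧ s τ ≤ s t ∧ s t - s τ ≤ r / 2 := by
    have hδτ : δ ≤ τ := by linarith [hτ.1, ht.1]
    refine ⟨hρs.trans (hB.s_le_s hS le_rfl hδτ (hτ.2.trans ht.2)), hB.s_le_s hS hδτ hτ.2 ht.2, ?_⟩
    calc s t - s τ ≤ L * (t - τ) := hB.s_sub_le hS hδτ hτ.2 ht.2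
      _ ≤ L * (2 * r ^ 2) := by gcongr; linarith [hτ.1]
      _ = 4 * r * L * (r / 2) := by ring
      _ ≤ r / 2 := mul_le_of_le_one_left (by positivity) hrL
  obtain ⟨hρa, hat, hsa⟩ := hs ⟨le_rfl, by linarith [sq_nonneg r]⟩
  have huxx := HeatAt.abs_fxx_le_of_time_osc_le (f := u) (fx := fun t => deriv (u t))
    (fxx := fun t => deriv (deriv (u t))) (t₀ := t) (x₀ := s t - 4 * r) (r := r)
    (M := (2 * L ^ 2 + 20 * L / ρ) * r ^ 2) hr (by positivity)
    (hS.continuousOn_u_prod (by linarith [ht.1]) ht.2 (by linarith) (by linarith))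
    (fun τ hτ y hy => hS.heatAt_of_mem_Ioo (by linarith [ht.1]) ⟨hτ.1, hτ.2.trans ht.2⟩
      ⟨by linarith [hy.1], by linarith [hy.2]⟩) fun t₁ ht₁ t₂ ht₂ hlt y hy => ?_
  · exact huxx.trans_eq (by field_simp)
  · obtain ⟨hρt₁, hst₁, hlip⟩ := hs ht₁
    exact hB.abs_time_diff_le_mul_sq_near_free hS hρ hρt₁ (by linarith [ht₁.1, ht.1]) hr
      (by linarith) hlt (by linarith [ht₁.1, ht₂.2]) (ht₂.2.trans ht.2)
      ⟨by linarith [hy.1], by linarith [hy.2]⟩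

end HasParabolicBound

namespace IsSolOn

variable {p s₀ T a α : ℝ} {φ s : ℝ → ℝ} {u : ℝ → ℝ → ℝ}

lemma exists_abs_uxx_le_near_zero (hS : IsSolOn p s₀ φ T s u) (hp : 1 ≤ p) (hα₀ : 0 ≤ α)
    (hα₁ : α < 1) (ha : 0 < a) (haT : a ≤ T) :
    ∃ C > 0, ∃ R > 0, ∀ t ∈ Icc a T, ∀ x ∈ Ioc 0 R,
      |deriv (deriv (u t)) x| ≤ C * x ^ (2 * α - 2) := by
  obtain ⟨L, hB⟩ := hS.exists_hasParabolicBound (δ := a / 4) (by positivity) (by linarith)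
  obtain ⟨K, hK, h₀, hh₀, R, hR, hosc⟩ := hB.exists_abs_time_diff_le_rpow hS hp hα₀ hα₁
  have hh₀_pos := hh₀.1
  have hR_pos := hR.1
  refine ⟨148 * K, by positivity, min (√h₀) (R / 2), by positivity, fun t ht x hx => ?_⟩
  refine hB.abs_uxx_le_rpow_near_zero hS hα₀ hK hh₀ hR hosc ⟨by linarith [ht.1], ht.2⟩ hx.1
    (by linarith [hx.2, min_le_right (√h₀) (R / 2)]) ?_
  exact (le_sqrt' hx.1).1 (hx.2.trans (min_le_left _ _))

lemma exists_abs_uxx_le_near_free (hS : IsSolOn p s₀ φ T s u) (ha : 0 < a) (haT : a ≤ T) :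
    ∃ C > 0, ∃ R > 0, ∀ t ∈ Icc a T, ∀ x ∈ Ico (s t - R) (s t), |deriv (deriv (u t)) x| ≤ C := by
  obtain ⟨L, hB⟩ := hS.exists_hasParabolicBound (δ := a / 4) (by positivity) (by linarith)
  obtain ⟨ρ, hρ, hρs, hρδ⟩ := hB.exists_radius hS
  have hL := hB.L_pos
  refine ⟨37 * (2 * L ^ 2 + 20 * L / ρ), by positivity, min (1 / L) (ρ / 2), by positivity,
    fun t ht x hx => ?_⟩
  have hdist : s t - x ≤ min (1 / L) (ρ / 2) := by linarith [hx.1]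
  have huxx := hB.abs_uxx_le_near_free hS (r := (s t - x) / 4) (by linarith) hρδ
    ⟨by linarith [ht.1], ht.2⟩ (by linarith [hx.2])
    (by
      rw [mul_div_cancel₀ _ four_ne_zero]
      exact (le_div_iff₀ hL).1 (hdist.trans (min_le_left _ _)))
    (by linarith [min_le_right (1 / L) (ρ / 2)])
  rwa [mul_div_cancel₀ _ four_ne_zero, sub_sub_cancel] at huxx

lemma exists_abs_uxx_le (hS : IsSolOn p s₀ φ T s u) (hp : 1 ≤ p) (hα₀ : 0 ≤ α) (hα₁ : α < 1)
    (ha : 0 < a) (haT : a ≤ T) :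
    ∃ C > 0, ∀ t ∈ Icc a T, ∀ x ∈ Ioo 0 (s t),
      |deriv (deriv (u t)) x| ≤ C * (1 + x ^ (2 * α - 2)) := by
  obtain ⟨C₁, hC₁, R₁, hR₁, hzero⟩ := hS.exists_abs_uxx_le_near_zero hp hα₀ hα₁ ha haT
  obtain ⟨C₂, hC₂, R₂, hR₂, hfree⟩ := hS.exists_abs_uxx_le_near_free ha haT
  have hs : ContinuousOn (fun t => s t - R₂) (Icc a T) :=
    (hS.s_cont.mono (Icc_subset_Icc_left ha.le)).sub continuousOn_const
  obtain ⟨C₃, hmiddle⟩ := (isCompact_slab (l := R₁) hs).exists_bound_of_continuousOn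
    (hS.uxx_cont.mono fun q hq => ⟨⟨ha.trans_le hq.1.1, hq.1.2⟩, hR₁.trans_le hq.2.1,
      hq.2.2.trans_lt (sub_lt_self _ hR₂)⟩)
  refine ⟨C₁ + C₂ + |C₃|, by positivity, fun t ht x hx => ?_⟩
  have hpow : 0 ≤ x ^ (2 * α - 2) := rpow_nonneg hx.1.le _
  have hle_mul : C₁ + C₂ + |C₃| ≤ (C₁ + C₂ + |C₃|) * (1 + x ^ (2 * α - 2)) :=
    le_mul_of_one_le_right (by positivity) (by linarith)
  rcases le_or_gt x R₁ with hx₁ | hx₁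
  · refine (hzero t ht x ⟨hx.1, hx₁⟩).trans ?_
    gcongr <;> linarith [abs_nonneg C₃]
  rcases le_or_gt (s t - R₂) x with hx₂ | hx₂
  · exact (hfree t ht x ⟨hx₂, hx.2⟩).trans (by linarith [abs_nonneg C₃])
  · exact (hmiddle (t, x) ⟨ht, hx₁.le, hx₂.le⟩).trans (by linarith [le_abs_self C₃])

lemma exists_abs_u_zero_sub_le (hS : IsSolOn p s₀ φ T s u) (hp : 1 ≤ p) (hα₀ : 0 ≤ α)
    (hα₁ : α < 1) (ha : 0 < a) (haT : a ≤ T) :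
    ∃ K > 0, ∃ h₀ > 0, ∀ b ∈ Icc a T, ∀ h ∈ Ioc 0 h₀,
      |u b 0 - u (b - h) 0| ≤ K * h ^ α := by
  obtain ⟨L, hB⟩ := hS.exists_hasParabolicBound (δ := a / 3) (by positivity) (by linarith)
  obtain ⟨K, hK, h₀, hh₀, R, hR, hosc⟩ := hB.exists_abs_time_diff_le_rpow hS hp hα₀ hα₁
  exact ⟨K, hK, h₀, hh₀.1, fun b hb h hh =>
    hosc b ⟨by linarith [hb.1], hb.2⟩ h hh 0 ⟨le_rfl, hR.1.le⟩⟩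

end IsSolOn

/-! ### Integrals over moving intervals -/

lemma intervalIntegral_eq_integral_indicator_Ioo {f : ℝ → ℝ} {a b : ℝ} (hab : a ≤ b) :
    ∫ x in a..b, f x = ∫ x, (Ioo a b).indicator f x := by
  rw [intervalIntegral.integral_of_le hab, integral_Ioc_eq_integral_Ioo,
    integral_indicator measurableSet_Ioo]

lemma tendsto_indicator_Ioo {ι : Type*} {l : Filter ι} {F : ι → ℝ → ℝ} {f : ℝ → ℝ}
    {σ : ι → ℝ} {a S x : ℝ} (hσ : Tendsto σ l (𝓝 S)) (hxS : x ≠ S)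
    (hF : x ∈ Ioo a S → Tendsto (fun i => F i x) l (𝓝 (f x))) :
    Tendsto (fun i => (Ioo a (σ i)).indicator (F i) x) l (𝓝 ((Ioo a S).indicator f x)) := by
  by_cases hx : x ∈ Ioo a S
  · rw [indicator_of_mem hx]
    refine (hF hx).congr' ?_
    filter_upwards [hσ.eventually (lt_mem_nhds hx.2)] with i hi
    rw [indicator_of_mem (show x ∈ Ioo a (σ i) from ⟨hx.1, hi⟩)]
  · rw [indicator_of_notMem hx]
    refine tendsto_const_nhds.congr' ?_
    rcases le_or_gt x a with hxa | hxa
    · exact .of_forall fun i => (indicator_of_notMem (fun h => hxa.not_gt h.1) _).symm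
    · have hSx : S < x := lt_of_le_of_ne (not_lt.1 fun h => hx ⟨hxa, h⟩) hxS.symm
      filter_upwards [hσ.eventually (gt_mem_nhds hSx)] with i hi
      exact (indicator_of_notMem (fun h => hi.not_gt h.2) _).symm

lemma tendsto_intervalIntegral_of_dominated {ι : Type*} {l : Filter ι} [l.IsCountablyGenerated]
    {F : ι → ℝ → ℝ} {f g : ℝ → ℝ} {σ : ι → ℝ} {a S R : ℝ} (haS : a < S) (hSR : S < R)
    (hσ : Tendsto σ l (𝓝 S)) (hg : IntervalIntegrable g volume a R)
    (hF : ∀ᶠ i in l, ContinuousOn (F i) (Ioo a (σ i)))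
    (hFg : ∀ᶠ i in l, ∀ x ∈ Ioo a (σ i), |F i x| ≤ g x)
    (hlim : ∀ x ∈ Ioo a S, Tendsto (fun i => F i x) l (𝓝 (f x))) :
    Tendsto (fun i => ∫ x in a..(σ i), F i x) l (𝓝 (∫ x in a..S, f x)) := by
  rw [intervalIntegral_eq_integral_indicator_Ioo haS.le]
  refine Tendsto.congr' (f₁ := fun i => ∫ x, (Ioo a (σ i)).indicator (F i) x) ?_ ?_
  · filter_upwards [hσ.eventually (lt_mem_nhds haS)] with i hi
    exact (intervalIntegral_eq_integral_indicator_Ioo hi.le).symm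
  refine tendsto_integral_filter_of_dominated_convergence
    ((Ioo a R).indicator fun x => |g x|) ?_ ?_ ?_ ?_
  · filter_upwards [hF] with i hi
    exact (aestronglyMeasurable_indicator_iff measurableSet_Ioo).2
      (hi.aestronglyMeasurable measurableSet_Ioo)
  · filter_upwards [hFg, hσ.eventually (gt_mem_nhds hSR)] with i hi hiR
    refine .of_forall fun x => ?_
    by_cases hx : x ∈ Ioo a (σ i)
    · rw [indicator_of_mem hx, indicator_of_mem (show x ∈ Ioo a R from ⟨hx.1, hx.2.trans hiR⟩)]
      exact (hi x hx).trans (le_abs_self _)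
    · rw [indicator_of_notMem hx, norm_zero]
      exact indicator_nonneg (fun _ _ => abs_nonneg _) _
  · rw [integrable_indicator_iff measurableSet_Ioo]
    exact ((intervalIntegrable_iff_integrableOn_Ioo_of_le (haS.trans hSR).le).1 hg).abs
  · filter_upwards [Measure.ae_ne volume S] with x hx
    exact tendsto_indicator_Ioo hσ hx (hlim x)

lemma intervalIntegrable_of_continuousOn_Ioo_of_abs_le {f g : ℝ → ℝ} {a b : ℝ} (hab : a ≤ b)
    (hg : IntervalIntegrable g volume a b) (hf : ContinuousOn f (Ioo a b))
    (hfg : ∀ x ∈ Ioo a b, |f x| ≤ g x) : IntervalIntegrable f volume a b := by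
  rw [intervalIntegrable_iff_integrableOn_Ioo_of_le hab] at hg ⊢
  refine Integrable.mono' hg (hf.aestronglyMeasurable measurableSet_Ioo) ?_
  rw [ae_restrict_iff' measurableSet_Ioo]
  exact .of_forall hfg

lemma exists_intervalIntegral_eq_sub_mul {f : ℝ → ℝ} {a b : ℝ} (hf : ContinuousOn f (uIcc a b)) :
    ∃ c ∈ uIcc a b, ∫ x in a..b, f x = (b - a) * f c := by
  rcases eq_or_ne a b with rfl | hab
  · exact ⟨a, left_mem_uIcc, by simp⟩
  · obtain ⟨c, hc, hfc⟩ := exists_eq_interval_average hab hf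
    refine ⟨c, uIoo_subset_uIcc_self hc, ?_⟩
    rw [hfc, interval_average_eq_div, mul_div_cancel₀ _ (sub_ne_zero.2 hab.symm)]

lemma tendsto_intervalIntegral_div {ι : Type*} {l : Filter ι} {α β h : ι → ℝ} {G : ι → ℝ → ℝ}
    {m c : ℝ} (hm : Tendsto (fun i => (β i - α i) / h i) l (𝓝 m))
    (hG : ∀ᶠ i in l, ContinuousOn (G i) (uIcc (α i) (β i)))
    (hlim : ∀ ξ : ι → ℝ, (∀ᶠ i in l, ξ i ∈ uIcc (α i) (β i)) →
      Tendsto (fun i => G i (ξ i)) l (𝓝 c)) :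
    Tendsto (fun i => (∫ x in (α i)..(β i), G i x) / h i) l (𝓝 (m * c)) := by
  obtain ⟨ξ, hξ⟩ := skolem.1 (hG.mono fun i hi => exists_intervalIntegral_eq_sub_mul hi)
  refine (hm.mul (hlim ξ (hξ.mono fun i hi => hi.1))).congr' ?_
  filter_upwards [hξ] with i hi
  rw [hi.2]
  ring

/-- The weight `1 + x ^ (-1/4)`, which bounds the possible blow-up of `u_xx` at the fixed boundary
`x = 0` and is square integrable there. -/
def uxxWeight (x : ℝ) : ℝ := 1 + x ^ (-1 / 4 : ℝ)

lemma intervalIntegrable_uxxWeight (a b : ℝ) : IntervalIntegrable uxxWeight volume a b :=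
  intervalIntegrable_const.add (intervalIntegral.intervalIntegrable_rpow' (by norm_num))

lemma uxxWeight_sq {x : ℝ} (hx : 0 ≤ x) :
    uxxWeight x ^ 2 = 1 + 2 * x ^ (-1 / 4 : ℝ) + x ^ (-1 / 2 : ℝ) := by
  have hsq : x ^ (-1 / 2 : ℝ) = (x ^ (-1 / 4 : ℝ)) ^ 2 := by
    rw [← Real.rpow_natCast, ← Real.rpow_mul hx]
    norm_num
  rw [hsq, uxxWeight]
  ring

lemma intervalIntegrable_uxxWeight_sq {b : ℝ} (hb : 0 ≤ b) :
    IntervalIntegrable (fun x => uxxWeight x ^ 2) volume 0 b := by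
  have hrpow : IntervalIntegrable
      (fun x : ℝ => 1 + 2 * x ^ (-1 / 4 : ℝ) + x ^ (-1 / 2 : ℝ)) volume 0 b :=
    (intervalIntegrable_const.add
      ((intervalIntegral.intervalIntegrable_rpow' (by norm_num)).const_mul 2)).add
      (intervalIntegral.intervalIntegrable_rpow' (by norm_num))
  refine hrpow.congr fun x hx => ?_
  rw [uIoc_of_le hb] at hx
  exact (uxxWeight_sq hx.1.le).symm

/-! ### The trapezoid rule for powers -/

lemma exists_rpow_sub_rpow_div_eq {p : ℝ} (hp : 0 ≤ p) (A B : ℝ) :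
    ∃ c ∈ uIcc A B, (B ^ (p + 1) - A ^ (p + 1)) / (p + 1) = (B - A) * c ^ p := by
  have hcont : Continuous fun x : ℝ => x ^ p := Real.continuous_rpow_const hp
  obtain ⟨c, hc, hint⟩ := exists_intervalIntegral_eq_sub_mul (hcont.continuousOn (s := uIcc A B))
  exact ⟨c, hc, by rw [← hint, integral_rpow (Or.inl (by linarith))]⟩

lemma abs_trapezoid_rpow_sub_le {p L A B : ℝ} (hp : 1 ≤ p) (hA : A ∈ Icc 0 L)
    (hB : B ∈ Icc 0 L) :
    |1 / 2 * (B - A) * (A ^ p + B ^ p) - (B ^ (p + 1) - A ^ (p + 1)) / (p + 1)| ≤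
      p * L ^ (p - 1) * |B - A| ^ 2 := by
  obtain ⟨c, hc, hmean⟩ := exists_rpow_sub_rpow_div_eq (zero_le_one.trans hp) A B
  have hcL : c ∈ Icc 0 L := uIcc_subset_Icc hA hB hc
  have hM : 0 ≤ p * L ^ (p - 1) :=
    mul_nonneg (zero_le_one.trans hp) (Real.rpow_nonneg (hA.1.trans hA.2) _)
  have hAc : |A ^ p - c ^ p| ≤ p * L ^ (p - 1) * |B - A| :=
    (abs_rpow_sub_rpow_le hp hA hcL).trans <| mul_le_mul_of_nonneg_left
      (abs_sub_comm A c ▸ abs_sub_left_of_mem_uIcc hc) hM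
  have hBc : |B ^ p - c ^ p| ≤ p * L ^ (p - 1) * |B - A| :=
    (abs_rpow_sub_rpow_le hp hB hcL).trans <|
      mul_le_mul_of_nonneg_left (abs_sub_right_of_mem_uIcc hc) hM
  calc |1 / 2 * (B - A) * (A ^ p + B ^ p) - (B ^ (p + 1) - A ^ (p + 1)) / (p + 1)|
      = |B - A| * |1 / 2 * (A ^ p - c ^ p) + 1 / 2 * (B ^ p - c ^ p)| := by
        rw [hmean, ← abs_mul]
        ring_nf
    _ ≤ |B - A| * (p * L ^ (p - 1) * |B - A|) := by
        gcongr
        rw [abs_le] at hAc hBc ⊢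
        constructor <;> linarith
    _ = p * L ^ (p - 1) * |B - A| ^ 2 := by ring

/-! ### Straddling difference quotients -/

/-- Pairs `(min t τ, max t τ)` as `τ → t`, `τ ≠ t`. Along this filter every difference quotient is
taken over an ordered time interval having `t` as an endpoint, so that a solution can be compared on
the smaller of its two domains. -/
def straddle (t : ℝ) : Filter (ℝ × ℝ) := map (fun τ => (min t τ, max t τ)) (𝓝[≠] t)

instance (t : ℝ) : (straddle t).IsCountablyGenerated :=
  inferInstanceAs (map _ _).IsCountablyGenerated

lemma hasDerivAt_iff_tendsto_straddle {f : ℝ → ℝ} {f' t : ℝ} :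
    HasDerivAt f f' t ↔
      Tendsto (fun q : ℝ × ℝ => (f q.2 - f q.1) / (q.2 - q.1)) (straddle t) (𝓝 f') := by
  rw [hasDerivAt_iff_tendsto_slope, straddle, tendsto_map'_iff]
  refine tendsto_congr fun τ => ?_
  rcases le_total t τ with h | h
  · simp [h, slope_def_field]
  · simp [h, slope_comm f t, slope_def_field]

lemma tendsto_fst_straddle (t : ℝ) : Tendsto Prod.fst (straddle t) (𝓝 t) := by
  have hmin : ContinuousAt (fun τ => min t τ) t := by fun_prop
  simpa [straddle, tendsto_map'_iff, Function.comp_def] using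
    hmin.tendsto.mono_left nhdsWithin_le_nhds

lemma tendsto_snd_straddle (t : ℝ) : Tendsto Prod.snd (straddle t) (𝓝 t) := by
  have hmax : ContinuousAt (fun τ => max t τ) t := by fun_prop
  simpa [straddle, tendsto_map'_iff, Function.comp_def] using
    hmax.tendsto.mono_left nhdsWithin_le_nhds

lemma tendsto_sub_straddle (t : ℝ) :
    Tendsto (fun q : ℝ × ℝ => q.2 - q.1) (straddle t) (𝓝 0) := by
  simpa using (tendsto_snd_straddle t).sub (tendsto_fst_straddle t)

lemma eventually_straddle_mem_Icc {a t T : ℝ} (hat : a < t) (htT : t < T) :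
    ∀ᶠ q in straddle t, q.1 ∈ Icc a T ∧ q.2 ∈ Icc a T ∧ q.1 < q.2 := by
  have hlt : ∀ᶠ q in straddle t, q.1 < q.2 := by
    rw [straddle, eventually_map]
    filter_upwards [self_mem_nhdsWithin] with τ hτ using min_lt_max.2 (Ne.symm hτ)
  filter_upwards [tendsto_fst_straddle t (Icc_mem_nhds hat htT),
    tendsto_snd_straddle t (Icc_mem_nhds hat htT), hlt] with q h₁ h₂ h₁₂ using ⟨h₁, h₂, h₁₂⟩

/-! ### Identities between two times -/

lemma integral_sq_sub_integral_sq {f g f' g' f'' g'' : ℝ → ℝ} {a b : ℝ} (hab : a ≤ b)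
    (hf : ContinuousOn f (Icc a b)) (hg : ContinuousOn g (Icc a b))
    (hf' : ContinuousOn f' (Icc a b)) (hg' : ContinuousOn g' (Icc a b))
    (hff' : ∀ x ∈ Ioo a b, HasDerivAt f (f' x) x) (hgg' : ∀ x ∈ Ioo a b, HasDerivAt g (g' x) x)
    (hff'' : ∀ x ∈ Ioo a b, HasDerivAt f' (f'' x) x)
    (hgg'' : ∀ x ∈ Ioo a b, HasDerivAt g' (g'' x) x)
    (hint : IntervalIntegrable (fun x => (f x - g x) * (f'' x + g'' x)) volume a b) :
    (∫ x in a..b, f' x ^ 2) - ∫ x in a..b, g' x ^ 2 =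
      (f b - g b) * (f' b + g' b) - (f a - g a) * (f' a + g' a)
        - ∫ x in a..b, (f x - g x) * (f'' x + g'' x) := by
  have hf'int : IntervalIntegrable (fun x => f' x ^ 2) volume a b :=
    (hf'.pow 2).intervalIntegrable_of_Icc hab
  have hg'int : IntervalIntegrable (fun x => g' x ^ 2) volume a b :=
    (hg'.pow 2).intervalIntegrable_of_Icc hab
  have hparts := intervalIntegral.integral_eq_sub_of_hasDerivAt_of_le hab
    ((hf.sub hg).mul (hf'.add hg'))
    (f' := fun x => f' x ^ 2 - g' x ^ 2 + (f x - g x) * (f'' x + g'' x))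
    (fun x hx => (((hff' x hx).sub (hgg' x hx)).mul ((hff'' x hx).add (hgg'' x hx))).congr_deriv
      (by simp only [Pi.sub_apply, Pi.add_apply]; ring)) ((hf'int.sub hg'int).add hint)
  rw [intervalIntegral.integral_add (hf'int.sub hg'int) hint,
    intervalIntegral.integral_sub hf'int hg'int] at hparts
  simp only [Pi.mul_apply, Pi.sub_apply, Pi.add_apply] at hparts
  linarith

/-- `u_xx` is bounded by `C` times the weight `1 + x ^ (-1/4)` for all times in `[a, T]`. -/
def HasUxxBound (s : ℝ → ℝ) (u : ℝ → ℝ → ℝ) (a T C : ℝ) : Prop :=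
  ∀ t ∈ Icc a T, ∀ x ∈ Ioo 0 (s t), |deriv (deriv (u t)) x| ≤ C * uxxWeight x

namespace IsSolOn

variable {p s₀ T a b c t x C : ℝ} {φ s : ℝ → ℝ} {u : ℝ → ℝ → ℝ}

lemma exists_hasUxxBound (hS : IsSolOn p s₀ φ T s u) (hp : 1 ≤ p) (ha : 0 < a) (haT : a ≤ T) :
    ∃ C, HasUxxBound s u a T C := by
  obtain ⟨C, -, hC⟩ := hS.exists_abs_uxx_le hp (α := 7 / 8) (by norm_num) (by norm_num) ha haT
  refine ⟨C, fun t ht x hx => (hC t ht x hx).trans_eq ?_⟩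
  rw [uxxWeight]
  norm_num

lemma s_le_s (hS : IsSolOn p s₀ φ T s u) (hb : 0 ≤ b) (hbc : b ≤ c) (hc : c ≤ T) : s b ≤ s c :=
  hS.monotoneOn_s ⟨hb, hbc.trans hc⟩ ⟨hb.trans hbc, hc⟩ hbc

lemma continuousOn_uxx (hS : IsSolOn p s₀ φ T s u) (ht : t ∈ Ioc 0 T) :
    ContinuousOn (deriv (deriv (u t))) (Ioo 0 (s t)) :=
  hS.uxx_cont.comp (f := fun x : ℝ => (t, x)) (by fun_prop) fun _ hx => ⟨ht, hx⟩

lemma abs_u_sub_le (hS : IsSolOn p s₀ φ T s u) (hC : HasUxxBound s u a T C) (ha : 0 < a)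
    (hb : b ∈ Icc a T) (hc : c ∈ Icc a T) (hbc : b ≤ c) (hx : x ∈ Ioo 0 (s b)) :
    |u c x - u b x| ≤ (c - b) * (C * uxxWeight x) := by
  have hb₀ : 0 < b := ha.trans_le hb.1
  have hle := (convex_Icc b c).norm_image_sub_le_of_norm_hasDerivWithin_le (f := fun τ => u τ x)
    (fun τ hτ =>
      (hS.heatAt_of_mem_Ioo hb₀ ⟨hτ.1, hτ.2.trans hc.2⟩ hx).hasDerivAt_time.hasDerivWithinAt)
    (fun τ hτ => hC τ ⟨hb.1.trans hτ.1, hτ.2.trans hc.2⟩ x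
      ⟨hx.1, hx.2.trans_le (hS.s_le_s hb₀.le hτ.1 (hτ.2.trans hc.2))⟩)
    (left_mem_Icc.2 hbc) (right_mem_Icc.2 hbc)
  rwa [norm_eq_abs, norm_eq_abs, abs_of_nonneg (sub_nonneg.2 hbc), mul_comm] at hle

lemma abs_u_sub_mul_uxx_add_le (hS : IsSolOn p s₀ φ T s u) (hC : HasUxxBound s u a T C)
    (ha : 0 < a) (hb : b ∈ Icc a T) (hc : c ∈ Icc a T) (hbc : b ≤ c) (hx : x ∈ Ioo 0 (s b)) :
    |(u c x - u b x) * (deriv (deriv (u c)) x + deriv (deriv (u b)) x)| ≤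
      (c - b) * (2 * C ^ 2 * uxxWeight x ^ 2) := by
  have hsbc := hS.s_le_s (ha.le.trans hb.1) hbc hc.2
  have huxx : |deriv (deriv (u c)) x + deriv (deriv (u b)) x| ≤ 2 * (C * uxxWeight x) :=
    (abs_add_le _ _).trans
      (by linarith [hC c hc x ⟨hx.1, hx.2.trans_le hsbc⟩, hC b hb x hx])
  calc |(u c x - u b x) * (deriv (deriv (u c)) x + deriv (deriv (u b)) x)|
      ≤ (c - b) * (C * uxxWeight x) * (2 * (C * uxxWeight x)) := by
        rw [abs_mul]
        have hu := hS.abs_u_sub_le hC ha hb hc hbc hx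
        exact mul_le_mul hu huxx (abs_nonneg _) ((abs_nonneg _).trans hu)
    _ = (c - b) * (2 * C ^ 2 * uxxWeight x ^ 2) := by ring

lemma continuousOn_u_sub_mul_uxx_add (hS : IsSolOn p s₀ φ T s u) (hb : 0 < b) (hbc : b ≤ c)
    (hc : c ≤ T) :
    ContinuousOn (fun x => (u c x - u b x) * (deriv (deriv (u c)) x + deriv (deriv (u b)) x))
      (Ioo 0 (s b)) := by
  have hsub : Ioo 0 (s b) ⊆ Ioo 0 (s c) := Ioo_subset_Ioo_right (hS.s_le_s hb.le hbc hc)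
  have hcT : c ∈ Ioc 0 T := ⟨hb.trans_le hbc, hc⟩
  have hbT : b ∈ Ioc 0 T := ⟨hb, hbc.trans hc⟩
  exact (((hS.continuousOn_u (Ioc_subset_Icc_self hcT)).mono (hsub.trans Ioo_subset_Icc_self)).sub
    ((hS.continuousOn_u (Ioc_subset_Icc_self hbT)).mono Ioo_subset_Icc_self)).mul
    (((hS.continuousOn_uxx hcT).mono hsub).add (hS.continuousOn_uxx hbT))

lemma intervalIntegrable_u_sub_mul_uxx_add (hS : IsSolOn p s₀ φ T s u)
    (hC : HasUxxBound s u a T C) (ha : 0 < a) (hb : b ∈ Icc a T) (hc : c ∈ Icc a T)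
    (hbc : b ≤ c) :
    IntervalIntegrable
      (fun x => (u c x - u b x) * (deriv (deriv (u c)) x + deriv (deriv (u b)) x))
      volume 0 (s b) := by
  have hb₀ : 0 < b := ha.trans_le hb.1
  have hsb := (hS.s_pos b ⟨hb₀.le, hb.2⟩).le
  exact intervalIntegrable_of_continuousOn_Ioo_of_abs_le hsb
    (((intervalIntegrable_uxxWeight_sq hsb).const_mul (2 * C ^ 2)).const_mul (c - b))
    (hS.continuousOn_u_sub_mul_uxx_add hb₀ hbc hc.2)
    fun x hx => hS.abs_u_sub_mul_uxx_add_le hC ha hb hc hbc hx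

lemma integral_ux_sq_sub (hS : IsSolOn p s₀ φ T s u) (hC : HasUxxBound s u a T C) (ha : 0 < a)
    (hb : b ∈ Icc a T) (hc : c ∈ Icc a T) (hbc : b ≤ c) :
    (∫ x in (0:ℝ)..(s b), deriv (u c) x ^ 2) - ∫ x in (0:ℝ)..(s b), deriv (u b) x ^ 2 =
      u c (s b) * (deriv (u c) (s b) + deriv (u b) (s b))
        + (u c 0 - u b 0) * (u b 0 ^ p + u c 0 ^ p)
        - ∫ x in (0:ℝ)..(s b),
            (u c x - u b x) * (deriv (deriv (u c)) x + deriv (deriv (u b)) x) := by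
  have hb₀ : 0 < b := ha.trans_le hb.1
  have hbT : b ∈ Ioc 0 T := ⟨hb₀, hb.2⟩
  have hcT : c ∈ Ioc 0 T := ⟨hb₀.trans_le hbc, hc.2⟩
  have hsbc : s b ≤ s c := hS.s_le_s hb₀.le hbc hc.2
  have hIcc : Icc 0 (s b) ⊆ Icc 0 (s c) := Icc_subset_Icc_right hsbc
  have hheat_c (x : ℝ) (hx : x ∈ Ioo 0 (s b)) := hS.heatAt hcT (Ioo_subset_Ioo_right hsbc hx)
  have hheat_b (x : ℝ) (hx : x ∈ Ioo 0 (s b)) := hS.heatAt hbT hx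
  rw [integral_sq_sub_integral_sq (hS.s_pos b (Ioc_subset_Icc_self hbT)).le
    ((hS.continuousOn_u (Ioc_subset_Icc_self hcT)).mono hIcc)
    (hS.continuousOn_u (Ioc_subset_Icc_self hbT)) ((hS.continuousOn_ux hcT).mono hIcc)
    (hS.continuousOn_ux hbT) (fun x hx => (hheat_c x hx).hasDerivAt)
    (fun x hx => (hheat_b x hx).hasDerivAt) (fun x hx => (hheat_c x hx).hasDerivAt_fx)
    (fun x hx => (hheat_b x hx).hasDerivAt_fx)
    (hS.intervalIntegrable_u_sub_mul_uxx_add hC ha hb hc hbc),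
    hS.bc_free b hbT, ← hS.bc_zero b hbT, ← hS.bc_zero c hcT]
  ring

lemma energy_sub (hS : IsSolOn p s₀ φ T s u) (hC : HasUxxBound s u a T C) (ha : 0 < a)
    (hb : b ∈ Icc a T) (hc : c ∈ Icc a T) (hbc : b ≤ c) :
    energy p s u c - energy p s u b =
      1 / 2 * (u c (s b) * (deriv (u c) (s b) + deriv (u b) (s b)))
        - 1 / 2 * (∫ x in (0:ℝ)..(s b),
            (u c x - u b x) * (deriv (deriv (u c)) x + deriv (deriv (u b)) x))
        + 1 / 2 * (∫ x in (s b)..(s c), deriv (u c) x ^ 2)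
        + (1 / 2 * (u c 0 - u b 0) * (u b 0 ^ p + u c 0 ^ p)
          - (u c 0 ^ (p + 1) - u b 0 ^ (p + 1)) / (p + 1)) := by
  have hb₀ : 0 < b := ha.trans_le hb.1
  have hsb : 0 ≤ s b := (hS.s_pos b ⟨hb₀.le, hb.2⟩).le
  have hsbc : s b ≤ s c := hS.s_le_s hb₀.le hbc hc.2
  have hux : ContinuousOn (fun x => deriv (u c) x ^ 2) (Icc 0 (s c)) :=
    (hS.continuousOn_ux ⟨hb₀.trans_le hbc, hc.2⟩).pow 2
  have hsplit := intervalIntegral.integral_add_adjacent_intervals (μ := volume)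
    ((hux.mono (Icc_subset_Icc_right hsbc)).intervalIntegrable_of_Icc hsb)
    ((hux.mono (Icc_subset_Icc_left hsb)).intervalIntegrable_of_Icc hsbc)
  unfold energy
  linear_combination 1 / 2 * hS.integral_ux_sq_sub hC ha hb hc hbc - 1 / 2 * hsplit

lemma L1Norm_sub (hS : IsSolOn p s₀ φ T s u) (hb : 0 ≤ b) (hbc : b ≤ c) (hc : c ≤ T) :
    L1Norm s u c - L1Norm s u b =
      (∫ x in (0:ℝ)..(s b), (u c x - u b x)) + ∫ x in (s b)..(s c), u c x := by
  have hsb : 0 ≤ s b := (hS.s_pos b ⟨hb, hbc.trans hc⟩).le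
  have hsbc : s b ≤ s c := hS.s_le_s hb hbc hc
  have huc := hS.continuousOn_u ⟨hb.trans hbc, hc⟩
  have huc_int : IntervalIntegrable (u c) volume 0 (s b) :=
    (huc.mono (Icc_subset_Icc_right hsbc)).intervalIntegrable_of_Icc hsb
  rw [L1Norm, L1Norm, intervalIntegral.integral_sub huc_int
    ((hS.continuousOn_u ⟨hb, hbc.trans hc⟩).intervalIntegrable_of_Icc hsb),
    ← intervalIntegral.integral_add_adjacent_intervals huc_int
      ((huc.mono (Icc_subset_Icc_left hsb)).intervalIntegrable_of_Icc hsbc)]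
  ring

lemma integral_uxx (hS : IsSolOn p s₀ φ T s u) (hC : HasUxxBound s u a T C) (ha : 0 < a)
    (ht : t ∈ Icc a T) :
    ∫ x in (0:ℝ)..(s t), deriv (deriv (u t)) x = -deriv s t + u t 0 ^ p := by
  have htT : t ∈ Ioc 0 T := ⟨ha.trans_le ht.1, ht.2⟩
  have hst := (hS.s_pos t (Ioc_subset_Icc_self htT)).le
  rw [intervalIntegral.integral_eq_sub_of_hasDerivAt_of_le hst (hS.continuousOn_ux htT)
    (fun x hx => (hS.heatAt htT hx).hasDerivAt_fx)
    (intervalIntegrable_of_continuousOn_Ioo_of_abs_le hst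
      ((intervalIntegrable_uxxWeight 0 _).const_mul C) (hS.continuousOn_uxx htT) (hC t ht)),
    hS.stefan t htT, ← hS.bc_zero t htT]
  ring

lemma u_at_earlier_free_boundary (hS : IsSolOn p s₀ φ T s u) (hb : 0 ≤ b) (hbc : b ≤ c)
    (hc : c ∈ Ioc 0 T) : u c (s b) = -∫ x in (s b)..(s c), deriv (u c) x := by
  have hsb : 0 < s b := hS.s_pos b ⟨hb, hbc.trans hc.2⟩
  have hsbc : s b ≤ s c := hS.s_le_s hb hbc hc.2
  have hIcc : Icc (s b) (s c) ⊆ Icc 0 (s c) := Icc_subset_Icc_left hsb.le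
  rw [intervalIntegral.integral_eq_sub_of_hasDerivAt_of_le hsbc
    ((hS.continuousOn_u (Ioc_subset_Icc_self hc)).mono hIcc)
    (fun x hx => (hS.heatAt hc ⟨hsb.trans hx.1, hx.2⟩).hasDerivAt)
    (((hS.continuousOn_ux hc).mono hIcc).intervalIntegrable_of_Icc hsbc), hS.bc_free c hc]
  ring

end IsSolOn

/-! ### Limits of the difference quotients -/

namespace IsSolOn

variable {p s₀ T a t x C : ℝ} {φ s : ℝ → ℝ} {u : ℝ → ℝ → ℝ}

lemma hasDerivAt_s (hS : IsSolOn p s₀ φ T s u) (ht : t ∈ Ioc 0 T) :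
    HasDerivAt s (deriv s t) t :=
  (hS.s_diff t ht).hasDerivAt

lemma tendsto_s {ι : Type*} {l : Filter ι} {τ : ι → ℝ} (hS : IsSolOn p s₀ φ T s u)
    (ht : t ∈ Ioc 0 T) (hτ : Tendsto τ l (𝓝 t)) : Tendsto (fun i => s (τ i)) l (𝓝 (s t)) :=
  (hS.s_diff t ht).continuousAt.tendsto.comp hτ

lemma tendsto_uxx {ι : Type*} {l : Filter ι} {τ : ι → ℝ} (hS : IsSolOn p s₀ φ T s u)
    (ht : t ∈ Ioc 0 T) (hx : x ∈ Ioo 0 (s t)) (hτ : Tendsto τ l (𝓝 t))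
    (hτT : ∀ᶠ i in l, τ i ∈ Ioc 0 T) :
    Tendsto (fun i => deriv (deriv (u (τ i))) x) l (𝓝 (deriv (deriv (u t)) x)) := by
  refine (hS.uxx_cont (t, x) ⟨ht, hx⟩).tendsto.comp
    (tendsto_nhdsWithin_iff.2 ⟨hτ.prodMk_nhds tendsto_const_nhds, ?_⟩)
  filter_upwards [hτT, (hS.tendsto_s ht hτ).eventually (lt_mem_nhds hx.2)] with i hi hxi
  exact ⟨hi, hx.1, hxi⟩

lemma eventually_straddle (hS : IsSolOn p s₀ φ T s u) (ht : t ∈ Ioo 0 T) :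
    ∀ᶠ q in straddle t,
      q.1 ∈ Ioc 0 T ∧ q.2 ∈ Ioc 0 T ∧ q.1 ≤ q.2 ∧ 0 ≤ s q.1 ∧ s q.1 ≤ s q.2 := by
  filter_upwards [eventually_straddle_mem_Icc (half_lt_self ht.1) ht.2] with q ⟨h₁, h₂, h₁₂⟩
  have hq₁ : 0 < q.1 := (half_pos ht.1).trans_le h₁.1
  exact ⟨⟨hq₁, h₁.2⟩, ⟨hq₁.trans h₁₂, h₂.2⟩, h₁₂.le, (hS.s_pos _ ⟨hq₁.le, h₁.2⟩).le,
    hS.s_le_s hq₁.le h₁₂.le h₂.2⟩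

lemma tendsto_integral_between_free_boundaries {F : ℝ → ℝ → ℝ} (hS : IsSolOn p s₀ φ T s u)
    (ht : t ∈ Ioo 0 T)
    (hF : ContinuousOn (fun q : ℝ × ℝ => F q.1 q.2)
      {q : ℝ × ℝ | q.1 ∈ Ioc 0 T ∧ q.2 ∈ Icc 0 (s q.1)}) :
    Tendsto (fun q : ℝ × ℝ => (∫ x in (s q.1)..(s q.2), F q.2 x) / (q.2 - q.1)) (straddle t)
      (𝓝 (deriv s t * F t (s t))) := by
  have htT : t ∈ Ioc 0 T := Ioo_subset_Ioc_self ht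
  have hmem := hS.eventually_straddle ht
  refine tendsto_intervalIntegral_div (hasDerivAt_iff_tendsto_straddle.1 (hS.hasDerivAt_s htT))
    ?_ fun ξ hξ => ?_
  · filter_upwards [hmem] with q ⟨_, hq, _, hs₀, hs⟩
    rw [uIcc_of_le hs]
    exact hF.comp (f := fun x : ℝ => (q.2, x)) (by fun_prop)
      fun x hx => ⟨hq, hs₀.trans hx.1, hx.2⟩
  · have hξ' : ∀ᶠ q in straddle t, ξ q ∈ Icc (s q.1) (s q.2) := by
      filter_upwards [hξ, hmem] with q hq ⟨_, _, _, _, hs⟩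
      rwa [uIcc_of_le hs] at hq
    have hξ_lim : Tendsto ξ (straddle t) (𝓝 (s t)) :=
      tendsto_of_tendsto_of_tendsto_of_le_of_le' (hS.tendsto_s htT (tendsto_fst_straddle t))
        (hS.tendsto_s htT (tendsto_snd_straddle t)) (hξ'.mono fun _ h => h.1)
        (hξ'.mono fun _ h => h.2)
    refine (hF (t, s t) ⟨htT, (hS.s_pos t (Ioc_subset_Icc_self htT)).le, le_rfl⟩).tendsto.comp
      (tendsto_nhdsWithin_iff.2 ⟨(tendsto_snd_straddle t).prodMk_nhds hξ_lim, ?_⟩)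
    filter_upwards [hξ', hmem] with q hξq ⟨_, hq, _, hs₀, _⟩
    exact ⟨hq, hs₀.trans hξq.1, hξq.2⟩

lemma tendsto_integral_time_quotient (hS : IsSolOn p s₀ φ T s u) (hC : HasUxxBound s u a T C)
    (ha : 0 < a) (ht : t ∈ Ioo a T) :
    Tendsto (fun q : ℝ × ℝ => (∫ x in (0:ℝ)..(s q.1), (u q.2 x - u q.1 x)) / (q.2 - q.1))
      (straddle t) (𝓝 (∫ x in (0:ℝ)..(s t), deriv (deriv (u t)) x)) := by
  have htT : t ∈ Ioc 0 T := ⟨ha.trans ht.1, ht.2.le⟩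
  have hmem := eventually_straddle_mem_Icc ht.1 ht.2
  simp_rw [← intervalIntegral.integral_div]
  refine tendsto_intervalIntegral_of_dominated (hS.s_pos t (Ioc_subset_Icc_self htT))
    (lt_add_one (s t)) (hS.tendsto_s htT (tendsto_fst_straddle t))
    ((intervalIntegrable_uxxWeight 0 _).const_mul C) ?_ ?_ fun x hx => ?_
  · filter_upwards [hmem] with q ⟨h₁, h₂, h₁₂⟩
    have hq₁ : 0 ≤ q.1 := ha.le.trans h₁.1
    exact (((hS.continuousOn_u ⟨hq₁.trans h₁₂.le, h₂.2⟩).mono (Ioo_subset_Icc_self.trans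
      (Icc_subset_Icc_right (hS.s_le_s hq₁ h₁₂.le h₂.2)))).sub
      ((hS.continuousOn_u ⟨hq₁, h₁.2⟩).mono Ioo_subset_Icc_self)).div_const _
  · filter_upwards [hmem] with q ⟨h₁, h₂, h₁₂⟩ x hx
    rw [abs_div, abs_of_pos (sub_pos.2 h₁₂), div_le_iff₀' (sub_pos.2 h₁₂)]
    exact hS.abs_u_sub_le hC ha h₁ h₂ h₁₂.le hx
  · exact hasDerivAt_iff_tendsto_straddle.1 (hS.heatAt htT hx).hasDerivAt_time

lemma hasDerivAt_L1Norm (hS : IsSolOn p s₀ φ T s u) (hp : 1 ≤ p) (ht : t ∈ Ioo 0 T) :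
    HasDerivAt (L1Norm s u) (-deriv s t + u t 0 ^ p) t := by
  have ha : 0 < t / 2 := half_pos ht.1
  have hat : t / 2 < t := half_lt_self ht.1
  obtain ⟨C, hC⟩ := hS.exists_hasUxxBound hp ha (hat.trans ht.2).le
  have hfree := hS.tendsto_integral_between_free_boundaries (F := u) ht
    (hS.u_cont.mono fun q hq => ⟨Ioc_subset_Icc_self hq.1, hq.2⟩)
  rw [hS.bc_free t (Ioo_subset_Ioc_self ht), mul_zero] at hfree
  have hlim := (hS.tendsto_integral_time_quotient hC ha ⟨hat, ht.2⟩).add hfree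
  rw [add_zero, hS.integral_uxx hC ha ⟨hat.le, ht.2.le⟩] at hlim
  refine hasDerivAt_iff_tendsto_straddle.2 (hlim.congr' ?_)
  filter_upwards [eventually_straddle_mem_Icc hat ht.2] with q ⟨h₁, h₂, h₁₂⟩
  rw [hS.L1Norm_sub (ha.le.trans h₁.1) h₁₂.le h₂.2, add_div]

lemma tendsto_integral_time_quotient_mul_uxx (hS : IsSolOn p s₀ φ T s u)
    (hC : HasUxxBound s u a T C) (ha : 0 < a) (ht : t ∈ Ioo a T) :
    Tendsto (fun q : ℝ × ℝ => (∫ x in (0:ℝ)..(s q.1),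
        (u q.2 x - u q.1 x) * (deriv (deriv (u q.2)) x + deriv (deriv (u q.1)) x)) / (q.2 - q.1))
      (straddle t) (𝓝 (2 * ∫ x in (0:ℝ)..(s t), deriv (deriv (u t)) x ^ 2)) := by
  have htT : t ∈ Ioc 0 T := ⟨ha.trans ht.1, ht.2.le⟩
  have hst := hS.s_pos t (Ioc_subset_Icc_self htT)
  have hmem := eventually_straddle_mem_Icc ht.1 ht.2
  simp_rw [← intervalIntegral.integral_div, ← intervalIntegral.integral_const_mul]
  refine tendsto_intervalIntegral_of_dominated hst (lt_add_one (s t))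
    (hS.tendsto_s htT (tendsto_fst_straddle t))
    ((intervalIntegrable_uxxWeight_sq (by linarith)).const_mul (2 * C ^ 2)) ?_ ?_ fun x hx => ?_
  · filter_upwards [hmem] with q ⟨h₁, h₂, h₁₂⟩
    exact (hS.continuousOn_u_sub_mul_uxx_add (ha.trans_le h₁.1) h₁₂.le h₂.2).div_const _
  · filter_upwards [hmem] with q ⟨h₁, h₂, h₁₂⟩ x hx
    rw [abs_div, abs_of_pos (sub_pos.2 h₁₂), div_le_iff₀' (sub_pos.2 h₁₂)]
    exact hS.abs_u_sub_mul_uxx_add_le hC ha h₁ h₂ h₁₂.le hx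
  · have hquot := hasDerivAt_iff_tendsto_straddle.1 (hS.heatAt htT hx).hasDerivAt_time
    have huxx₂ := hS.tendsto_uxx htT hx (tendsto_snd_straddle t)
      (hmem.mono fun q h => ⟨ha.trans_le h.2.1.1, h.2.1.2⟩)
    have huxx₁ := hS.tendsto_uxx htT hx (tendsto_fst_straddle t)
      (hmem.mono fun q h => ⟨ha.trans_le h.1.1, h.1.2⟩)
    convert hquot.mul (huxx₂.add huxx₁) using 2 <;> ring

lemma tendsto_ux_at_earlier_free_boundary {τ : ℝ × ℝ → ℝ} (hS : IsSolOn p s₀ φ T s u)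
    (ht : t ∈ Ioc 0 T) (hτ : Tendsto τ (straddle t) (𝓝 t))
    (hτT : ∀ᶠ q in straddle t, τ q ∈ Ioc 0 T ∧ s q.1 ∈ Icc 0 (s (τ q))) :
    Tendsto (fun q => deriv (u (τ q)) (s q.1)) (straddle t) (𝓝 (-deriv s t)) := by
  rw [hS.stefan t ht, neg_neg]
  exact (hS.ux_cont (t, s t) ⟨ht, (hS.s_pos t (Ioc_subset_Icc_self ht)).le, le_rfl⟩).tendsto.comp
    (tendsto_nhdsWithin_iff.2
      ⟨hτ.prodMk_nhds (hS.tendsto_s ht (tendsto_fst_straddle t)), hτT⟩)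

lemma tendsto_free_boundary_term (hS : IsSolOn p s₀ φ T s u) (ht : t ∈ Ioo 0 T) :
    Tendsto (fun q : ℝ × ℝ =>
        u q.2 (s q.1) * (deriv (u q.2) (s q.1) + deriv (u q.1) (s q.1)) / (q.2 - q.1))
      (straddle t) (𝓝 (-2 * deriv s t ^ 3)) := by
  have htT : t ∈ Ioc 0 T := Ioo_subset_Ioc_self ht
  have hmem := hS.eventually_straddle ht
  have hux₂ := hS.tendsto_ux_at_earlier_free_boundary htT (tendsto_snd_straddle t)
    (hmem.mono fun q ⟨_, h₂, _, hs₀, hs⟩ => ⟨h₂, hs₀, hs⟩)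
  have hux₁ := hS.tendsto_ux_at_earlier_free_boundary htT (tendsto_fst_straddle t)
    (hmem.mono fun q ⟨h₁, _, _, hs₀, _⟩ => ⟨h₁, hs₀, le_rfl⟩)
  have hlim := (hS.tendsto_integral_between_free_boundaries (F := fun τ => deriv (u τ)) ht
    hS.ux_cont).neg.mul (hux₂.add hux₁)
  have hval : -(deriv s t * deriv (u t) (s t)) * (-deriv s t + -deriv s t) =
      -2 * deriv s t ^ 3 := by
    rw [hS.stefan t htT]
    ring
  rw [hval] at hlim
  refine hlim.congr' ?_
  filter_upwards [hmem] with q ⟨h₁, h₂, h₁₂, _⟩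
  rw [hS.u_at_earlier_free_boundary h₁.1.le h₁₂ h₂]
  ring

-- The trapezoid rule is exact up to the square of the increment of `u(·, 0)`, so a Hölder exponent
-- above `1/2` in time makes this term vanish without knowing that `u(·, 0)` is differentiable.
lemma tendsto_fixed_boundary_term (hS : IsSolOn p s₀ φ T s u) (hp : 1 ≤ p) (ht : t ∈ Ioo 0 T) :
    Tendsto (fun q : ℝ × ℝ =>
        (1 / 2 * (u q.2 0 - u q.1 0) * (u q.1 0 ^ p + u q.2 0 ^ p)
          - (u q.2 0 ^ (p + 1) - u q.1 0 ^ (p + 1)) / (p + 1)) / (q.2 - q.1))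
      (straddle t) (𝓝 0) := by
  have ha : 0 < t / 2 := half_pos ht.1
  have hat : t / 2 < t := half_lt_self ht.1
  obtain ⟨L, hL, hbound⟩ := hS.exists_abs_le ha
  obtain ⟨K, -, h₀, hh₀, hosc⟩ := hS.exists_abs_u_zero_sub_le hp (α := 7 / 8) (by norm_num)
    (by norm_num) ha (hat.trans ht.2).le
  have hu_mem (τ : ℝ) (hτ : τ ∈ Icc (t / 2) T) : u τ 0 ∈ Icc 0 L := by
    have hτT : τ ∈ Icc 0 T := ⟨ha.le.trans hτ.1, hτ.2⟩
    have hzero : (0 : ℝ) ∈ Icc 0 (s τ) := ⟨le_rfl, (hS.s_pos τ hτT).le⟩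
    exact ⟨hS.u_nonneg τ hτT 0 hzero, (le_abs_self _).trans (hbound τ hτ 0 hzero).1⟩
  have hrate : Tendsto (fun q : ℝ × ℝ => p * L ^ (p - 1) * K ^ 2 * (q.2 - q.1) ^ (3 / 4 : ℝ))
      (straddle t) (𝓝 0) := by
    simpa using ((tendsto_sub_straddle t).rpow_const (p := (3 / 4 : ℝ))
      (Or.inr (by norm_num))).const_mul (p * L ^ (p - 1) * K ^ 2)
  refine squeeze_zero_norm' ?_ hrate
  filter_upwards [eventually_straddle_mem_Icc hat ht.2,
    (tendsto_sub_straddle t).eventually (gt_mem_nhds hh₀)] with q ⟨h₁, h₂, h₁₂⟩ hq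
  have hh : 0 < q.2 - q.1 := sub_pos.2 h₁₂
  have hincr := hosc q.2 h₂ (q.2 - q.1) ⟨hh, hq.le⟩
  rw [sub_sub_cancel] at hincr
  rw [norm_eq_abs, abs_div, abs_of_pos hh, div_le_iff₀ hh]
  calc _ ≤ p * L ^ (p - 1) * |u q.2 0 - u q.1 0| ^ 2 :=
        abs_trapezoid_rpow_sub_le hp (hu_mem _ h₁) (hu_mem _ h₂)
    _ ≤ p * L ^ (p - 1) * (K * (q.2 - q.1) ^ (7 / 8 : ℝ)) ^ 2 := by gcongr
    _ = p * L ^ (p - 1) * K ^ 2 * ((q.2 - q.1) ^ (3 / 4 : ℝ) * (q.2 - q.1)) := by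
        rw [mul_pow, ← rpow_natCast (_ ^ _), ← rpow_mul hh.le, ← rpow_add_one hh.ne']
        norm_num
        ring
    _ = _ := by ring

lemma hasDerivAt_energy_uxx (hS : IsSolOn p s₀ φ T s u) (hp : 1 ≤ p) (ht : t ∈ Ioo 0 T) :
    HasDerivAt (energy p s u)
      (-(∫ x in (0:ℝ)..(s t), deriv (deriv (u t)) x ^ 2) - 1 / 2 * deriv s t ^ 3) t := by
  have ha : 0 < t / 2 := half_pos ht.1
  have hat : t / 2 < t := half_lt_self ht.1
  obtain ⟨C, hC⟩ := hS.exists_hasUxxBound hp ha (hat.trans ht.2).le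
  have hfree := hS.tendsto_free_boundary_term ht
  have hbulk := hS.tendsto_integral_time_quotient_mul_uxx hC ha ⟨hat, ht.2⟩
  have hnew := hS.tendsto_integral_between_free_boundaries
    (F := fun τ x => deriv (u τ) x ^ 2) ht (hS.ux_cont.pow 2)
  have hlim := (((hfree.const_mul (1 / 2)).sub (hbulk.const_mul (1 / 2))).add
    (hnew.const_mul (1 / 2))).add (hS.tendsto_fixed_boundary_term hp ht)
  have hux : deriv (u t) (s t) = -deriv s t := by
    rw [hS.stefan t (Ioo_subset_Ioc_self ht), neg_neg]
  refine (hasDerivAt_iff_tendsto_straddle.2 (hlim.congr' ?_)).congr_deriv (by rw [hux]; ring)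
  filter_upwards [eventually_straddle_mem_Icc hat ht.2] with q ⟨h₁, h₂, h₁₂⟩
  rw [hS.energy_sub hC ha h₁ h₂ h₁₂.le]
  ring

lemma integral_ut_sq_eq_integral_uxx_sq (hS : IsSolOn p s₀ φ T s u) (ht : t ∈ Ioc 0 T) :
    ∫ x in (0:ℝ)..(s t), deriv (fun τ => u τ x) t ^ 2 =
      ∫ x in (0:ℝ)..(s t), deriv (deriv (u t)) x ^ 2 :=
  intervalIntegral.integral_congr_Ioo_of_le (hS.s_pos t (Ioc_subset_Icc_self ht)).le fun x hx => by
    simp only [hS.heat t ht x hx]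

lemma hasDerivAt_energy (hS : IsSolOn p s₀ φ T s u) (hp : 1 ≤ p) (ht : t ∈ Ioo 0 T) :
    HasDerivAt (energy p s u)
      (-(∫ x in (0:ℝ)..(s t), deriv (fun τ => u τ x) t ^ 2) - 1 / 2 * deriv s t ^ 3) t := by
  rw [hS.integral_ut_sq_eq_integral_uxx_sq (Ioo_subset_Ioc_self ht)]
  exact hS.hasDerivAt_energy_uxx hp ht

lemma continuousAt_integral_uxx_sq (hS : IsSolOn p s₀ φ T s u) (hp : 1 ≤ p) (ht : t ∈ Ioo 0 T) :
    ContinuousAt (fun τ => ∫ x in (0:ℝ)..(s τ), deriv (deriv (u τ)) x ^ 2) t := by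
  have ha : 0 < t / 2 := half_pos ht.1
  have hat : t / 2 < t := half_lt_self ht.1
  have htT : t ∈ Ioc 0 T := Ioo_subset_Ioc_self ht
  have hst := hS.s_pos t (Ioc_subset_Icc_self htT)
  obtain ⟨C, hC⟩ := hS.exists_hasUxxBound hp ha (hat.trans ht.2).le
  have hmem : ∀ᶠ τ in 𝓝 t, τ ∈ Icc (t / 2) T := Icc_mem_nhds hat ht.2
  have hmem_Ioc : ∀ᶠ τ in 𝓝 t, τ ∈ Ioc 0 T := hmem.mono fun τ hτ => ⟨ha.trans_le hτ.1, hτ.2⟩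
  refine tendsto_intervalIntegral_of_dominated hst (lt_add_one (s t))
    (hS.tendsto_s htT tendsto_id)
    ((intervalIntegrable_uxxWeight_sq (by linarith)).const_mul (C ^ 2)) ?_ ?_ fun x hx =>
    (hS.tendsto_uxx htT hx tendsto_id hmem_Ioc).pow 2
  · filter_upwards [hmem_Ioc] with τ hτ using (hS.continuousOn_uxx hτ).pow 2
  · filter_upwards [hmem] with τ hτ x hx
    rw [abs_pow, ← mul_pow]
    exact pow_le_pow_left₀ (abs_nonneg _) (hC τ hτ x hx) 2

lemma continuousOn_integral_ut_sq (hS : IsSolOn p s₀ φ T s u) (hp : 1 ≤ p) :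
    ContinuousOn (fun τ => ∫ x in (0:ℝ)..(s τ), deriv (fun r => u r x) τ ^ 2) (Ioo 0 T) := by
  have huxx : ContinuousOn (fun τ => ∫ x in (0:ℝ)..(s τ), deriv (deriv (u τ)) x ^ 2) (Ioo 0 T) :=
    fun τ hτ => (hS.continuousAt_integral_uxx_sq hp hτ).continuousWithinAt
  exact huxx.congr fun τ hτ => hS.integral_ut_sq_eq_integral_uxx_sq (Ioo_subset_Ioc_self hτ)

lemma continuousOn_L1Norm (hS : IsSolOn p s₀ φ T s u) : ContinuousOn (L1Norm s u) (Icc 0 T) := by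
  intro t ht
  obtain ⟨L, hL⟩ := (isCompact_slab (a := 0) (b := T) (l := 0)
    hS.s_cont).exists_bound_of_continuousOn hS.u_cont
  have hs : Tendsto s (𝓝[Icc 0 T] t) (𝓝 (s t)) := hS.s_cont t ht
  refine tendsto_intervalIntegral_of_dominated (hS.s_pos t ht) (lt_add_one (s t)) hs
    (intervalIntegrable_const (c := L)) ?_ ?_ fun x hx => ?_
  · filter_upwards [self_mem_nhdsWithin] with τ hτ
    exact (hS.continuousOn_u hτ).mono Ioo_subset_Icc_self
  · filter_upwards [self_mem_nhdsWithin] with τ hτ x hx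
    exact hL (τ, x) ⟨hτ, Ioo_subset_Icc_self hx⟩
  · refine (hS.u_cont (t, x) ⟨ht, Ioo_subset_Icc_self hx⟩).tendsto.comp
      (tendsto_nhdsWithin_iff.2
        ⟨(tendsto_id.mono_left nhdsWithin_le_nhds).prodMk_nhds tendsto_const_nhds, ?_⟩)
    filter_upwards [self_mem_nhdsWithin, hs.eventually (lt_mem_nhds hx.2)] with τ hτ hxτ
    exact ⟨hτ, hx.1.le, hxτ.le⟩

lemma L1Norm_zero (hS : IsSolOn p s₀ φ T s u) : L1Norm s u 0 = ∫ x in (0:ℝ)..s₀, φ x := by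
  have hs₀ : 0 < s₀ := hS.init_s ▸ hS.s_pos 0 ⟨le_rfl, hS.T_pos.le⟩
  rw [L1Norm, hS.init_s]
  exact intervalIntegral.integral_congr_Ioo_of_le hs₀.le fun x hx =>
    hS.init x (Ioo_subset_Icc_self hx)

theorem L1Norm_sub_integral_init (hS : IsSolOn p s₀ φ T s u) (hp : 1 ≤ p) :
    L1Norm s u T - (∫ x in (0:ℝ)..s₀, φ x) = s₀ - s T + ∫ τ in (0:ℝ)..T, u τ 0 ^ p := by
  have hT := hS.T_pos.le
  have hu_zero : ContinuousOn (fun τ => u τ 0 ^ p) (Icc 0 T) :=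
    (hS.u_cont.comp (f := fun τ : ℝ => (τ, (0 : ℝ))) (by fun_prop)
      fun τ hτ => ⟨hτ, le_rfl, (hS.s_pos τ hτ).le⟩).rpow_const fun _ _ => Or.inr (by linarith)
  have hderiv (τ : ℝ) (hτ : τ ∈ Ioo 0 T) :
      HasDerivAt (fun r => L1Norm s u r + s r) (u τ 0 ^ p) τ :=
    ((hS.hasDerivAt_L1Norm hp hτ).fun_add
      (hS.hasDerivAt_s (Ioo_subset_Ioc_self hτ))).congr_deriv (by ring)
  rw [intervalIntegral.integral_eq_sub_of_hasDerivAt_of_le hT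
    (hS.continuousOn_L1Norm.add hS.s_cont) hderiv (hu_zero.intervalIntegrable_of_Icc hT),
    Pi.add_apply, Pi.add_apply, hS.L1Norm_zero, hS.init_s]
  ring

theorem integral_ut_sq_add_integral_deriv_s_cube {t₁ t₂ : ℝ} (hS : IsSolOn p s₀ φ T s u)
    (hp : 1 ≤ p) (ht₁ : 0 < t₁) (ht₁₂ : t₁ ≤ t₂) (ht₂ : t₂ < T) :
    (∫ τ in t₁..t₂, ∫ x in (0:ℝ)..(s τ), deriv (fun r => u r x) τ ^ 2) +
        1 / 2 * ∫ τ in t₁..t₂, deriv s τ ^ 3 =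
      energy p s u t₁ - energy p s u t₂ := by
  have hsub : Icc t₁ t₂ ⊆ Ioo 0 T := fun τ hτ => ⟨ht₁.trans_le hτ.1, hτ.2.trans_lt ht₂⟩
  have hut : IntervalIntegrable
      (fun τ => -∫ x in (0:ℝ)..(s τ), deriv (fun r => u r x) τ ^ 2) volume t₁ t₂ :=
    ((hS.continuousOn_integral_ut_sq hp).mono hsub).neg.intervalIntegrable_of_Icc ht₁₂
  have hs : IntervalIntegrable (fun τ => 1 / 2 * deriv s τ ^ 3) volume t₁ t₂ :=
    (((hS.s_deriv_cont.mono (hsub.trans Ioo_subset_Ioc_self)).pow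
      3).intervalIntegrable_of_Icc ht₁₂).const_mul (1 / 2)
  have hftc := intervalIntegral.integral_eq_sub_of_hasDerivAt
    (fun τ hτ => hS.hasDerivAt_energy hp (hsub (uIcc_of_le ht₁₂ ▸ hτ))) (hut.sub hs)
  rw [intervalIntegral.integral_sub hut hs, intervalIntegral.integral_neg,
    intervalIntegral.integral_const_mul] at hftc
  linarith

end IsSolOn

lemma exists_gt_ofReal_lt {t : ℝ} {T : ℝ≥0∞} (ht : 0 ≤ t) (htT : ENNReal.ofReal t < T) :
    ∃ T' > t, ENNReal.ofReal T' < T := by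
  obtain ⟨r, htr, hrT⟩ := ENNReal.lt_iff_exists_nnreal_btwn.1 htT
  rw [← ENNReal.ofReal_coe_nnreal] at htr hrT
  exact ⟨r, (ENNReal.ofReal_lt_ofReal_iff_of_nonneg ht).1 htr, hrT⟩

theorem stmt_5_general (p : ℝ) (hp : 1 ≤ p) (s₀ : ℝ) (φ : ℝ → ℝ)
    (T : ℝ≥0∞) (s : ℝ → ℝ) (u : ℝ → ℝ → ℝ)
    (hsol : ∀ T' : ℝ, 0 < T' → ENNReal.ofReal T' < T → IsSolOn p s₀ φ T' s u) :
    (∀ t : ℝ, 0 < t → ENNReal.ofReal t < T →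
      HasDerivAt (fun τ => energy p s u τ)
        (-(∫ x in (0:ℝ)..(s t), (deriv (fun τ => u τ x) t) ^ 2)
          - 1 / 2 * (deriv s t) ^ 3) t ∧
      L1Norm s u t - (∫ x in (0:ℝ)..s₀, φ x) =
        s₀ - s t + ∫ τ in (0:ℝ)..t, u τ 0 ^ p) ∧
    (∀ t₁ t₂ : ℝ, 0 < t₁ → t₁ ≤ t₂ → ENNReal.ofReal t₂ < T →
      (∫ τ in t₁..t₂, ∫ x in (0:ℝ)..(s τ), (deriv (fun r => u r x) τ) ^ 2) +
          1 / 2 * ∫ τ in t₁..t₂, (deriv s τ) ^ 3 =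
        energy p s u t₁ - energy p s u t₂) := by
  refine ⟨fun t ht htT => ⟨?_, (hsol t ht htT).L1Norm_sub_integral_init hp⟩,
    fun t₁ t₂ ht₁ ht₁₂ ht₂T => ?_⟩
  · obtain ⟨T', htT', hT'⟩ := exists_gt_ofReal_lt ht.le htT
    exact (hsol T' (ht.trans htT') hT').hasDerivAt_energy hp ⟨ht, htT'⟩
  · obtain ⟨T', ht₂_lt, hT'⟩ := exists_gt_ofReal_lt (ht₁.le.trans ht₁₂) ht₂T
    exact (hsol T' ((ht₁.trans_le ht₁₂).trans ht₂_lt) hT').integral_ut_sq_add_integral_deriv_s_cube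
      hp ht₁ ht₁₂ ht₂_lt

/-- Lemma 2.1: energy and mass identities for solutions on `(0,T)`, `T ∈ (0,∞]`. -/
theorem stmt_5 (p : ℝ) (hp : 1 < p) (s₀ : ℝ) (φ : ℝ → ℝ) (hW : memW s₀ φ)
    (T : ℝ≥0∞) (hT : 0 < T) (s : ℝ → ℝ) (u : ℝ → ℝ → ℝ)
    (hsol : ∀ T' : ℝ, 0 < T' → ENNReal.ofReal T' < T → IsSolOn p s₀ φ T' s u) :
    (∀ t : ℝ, 0 < t → ENNReal.ofReal t < T →
      HasDerivAt (fun τ => energy p s u τ)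
        (-(∫ x in (0:ℝ)..(s t), (deriv (fun τ => u τ x) t) ^ 2)
          - 1 / 2 * (deriv s t) ^ 3) t ∧
      L1Norm s u t - (∫ x in (0:ℝ)..s₀, φ x) =
        s₀ - s t + ∫ τ in (0:ℝ)..t, u τ 0 ^ p) ∧
    (∀ t₁ t₂ : ℝ, 0 < t₁ → t₁ ≤ t₂ → ENNReal.ofReal t₂ < T →
      (∫ τ in t₁..t₂, ∫ x in (0:ℝ)..(s τ), (deriv (fun r => u r x) τ) ^ 2) +
          1 / 2 * ∫ τ in t₁..t₂, (deriv s τ) ^ 3 =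
        energy p s u t₁ - energy p s u t₂) :=
  stmt_5_general p hp.le s₀ φ T s u hsol
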